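/- arXiv:2410.21700 — 2 statements merged into one kernel-verified Lean document; each statement's English description precedes it below -/
import Mathlib

section
/- Let λ > 1, let α be Diophantine, and let θ ∈ ℝ satisfy δ(α,θ) < ln λ. Let {φ_s} be an orthonormal basis of ℓ²(ℤ) of eigenfunctions of H_{λ,α,θ}, with m_s a global maximum of |φ_s|. Then there exist constants C, C₁, C₂ > 0 and M such that for every s with |m_s| ≥ M and all n, ℓ ∈ ℤ: |φ_s(n)·φ_s(ℓ)| ≤ C·e^{−C₁|n−ℓ| + C₂|n|}. -/
noncomputable section

open Filter Real

def distToInt (x : ℝ) : ℝ := |x - round x|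

def IsDiophantine (α : ℝ) : Prop :=
  ∃ κ τ : ℝ, 0 < κ ∧ 0 < τ ∧ ∀ k : ℤ, k ≠ 0 → τ / |(k : ℝ)| ^ κ ≤ distToInt (k * α)

def deltaPhase (α θ : ℝ) : ℝ :=
  limsup (fun n : ℤ => -Real.log (distToInt (2 * θ + n * α)) / |(n : ℝ)|) cofinite

def amoPot (lam α θ : ℝ) : ℤ → ℝ := fun n => 2 * lam * Real.cos (2 * Real.pi * (θ + n * α))

def IsEigenfunction (g : ℤ → ℝ) (E : ℝ) (φ : ℤ → ℝ) : Prop :=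
  ∀ n : ℤ, φ (n + 1) + φ (n - 1) + g n * φ n = E * φ n

def deltaPot (g : ℤ → ℝ) : ℝ :=
  limsup (fun n : ℤ => -Real.log (⨆ m : ℤ, |g (n - m) - g m|) / |(n : ℝ)|) cofinite

def matNorm (M : Matrix (Fin 2) (Fin 2) ℝ) : ℝ := ⨆ p : Fin 2 × Fin 2, |M p.1 p.2|

def transfer (g : ℤ → ℝ) (E : ℝ) : ℕ → ℤ → Matrix (Fin 2) (Fin 2) ℝ
  | 0, _ => 1
  | n + 1, k => !![E - g (k + n), -1; 1, 0] * transfer g E n k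

def LyapSup (g : ℤ → ℝ) (E : ℝ) : ℝ :=
  limsup (fun n : ℕ => ⨆ k : ℤ, Real.log (matNorm (transfer g E n k)) / n) atTop

def HasSULE (g : ℤ → ℝ) : Prop :=
  ∃ (Φ : HilbertBasis ℕ ℝ (lp (fun _ : ℤ => ℝ) 2)) (ns : ℕ → ℤ) (γ : ℝ),
    0 < γ ∧
    (∀ s : ℕ, ∃ E : ℝ, IsEigenfunction g E (fun n => Φ s n)) ∧
    ∀ ε : ℝ, 0 < ε → ∃ C : ℝ,
      ∀ (s : ℕ) (n : ℤ),
        |Φ s n| ≤ C * Real.exp (ε * |(ns s : ℝ)|) * Real.exp (-γ * |(n : ℝ) - (ns s : ℝ)|)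

/-! ### basic facts on distToInt and sine -/

lemma dti_le (x : ℝ) (z : ℤ) : distToInt x ≤ |x - z| := round_le x z

lemma dti_nonneg (x : ℝ) : 0 ≤ distToInt x := abs_nonneg _

lemma dti_le_half (x : ℝ) : distToInt x ≤ 1 / 2 := abs_sub_round x

lemma dti_neg (x : ℝ) : distToInt (-x) = distToInt x := by
  apply le_antisymm
  · refine (dti_le (-x) (-round x)).trans (le_of_eq ?_)
    unfold distToInt
    rw [← abs_neg]; push_cast; congr 1; ring
  · refine (dti_le x (-round (-x))).trans (le_of_eq ?_)
    unfold distToInt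
    rw [← abs_neg]; push_cast; congr 1; ring

lemma dti_add (x y : ℝ) : distToInt (x + y) ≤ distToInt x + distToInt y := by
  refine (dti_le (x + y) (round x + round y)).trans ?_
  unfold distToInt
  have : x + y - ((round x + round y : ℤ) : ℝ) = (x - round x) + (y - round y) := by push_cast; ring
  rw [this]; exact abs_add_le _ _

lemma dti_sub (x y : ℝ) : distToInt (x - y) ≤ distToInt x + distToInt y := by
  have := dti_add x (-y)
  rwa [dti_neg, ← sub_eq_add_neg] at this

/-- `sn u = |2 sin (π u)|`. -/
def sn (u : ℝ) : ℝ := |2 * Real.sin (π * u)|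

lemma sn_nonneg (u : ℝ) : 0 ≤ sn u := abs_nonneg _

lemma sn_le_two (u : ℝ) : sn u ≤ 2 := by
  unfold sn; rw [abs_mul, abs_two]; linarith [abs_sin_le_one (π * u)]

lemma abs_sin_sub_int (u : ℝ) (z : ℤ) : |Real.sin (π * (u - z))| = |Real.sin (π * u)| := by
  have : π * (u - z) = π * u - z * π := by ring
  rw [this, Real.sin_sub_int_mul_pi, abs_mul]
  have h : |((-1 : ℝ)) ^ z| = 1 := by rw [abs_zpow]; simp
  rw [h, one_mul]

lemma sn_ge (u : ℝ) : 4 * distToInt u ≤ sn u := by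
  unfold sn
  rw [abs_mul, abs_two, ← abs_sin_sub_int u (round u)]
  unfold distToInt
  set v := u - round u with hv
  have hv2 : |v| ≤ 1 / 2 := abs_sub_round u
  have := Real.mul_abs_le_abs_sin (x := π * v) (by
    rw [abs_mul, abs_of_pos pi_pos]; nlinarith [pi_pos])
  rw [abs_mul, abs_of_pos pi_pos] at this
  have h3 : 2 / π * (π * |v|) = 2 * |v| := by field_simp
  linarith

lemma sn_le (u : ℝ) : sn u ≤ 2 * π * distToInt u := by
  unfold sn
  rw [abs_mul, abs_two, ← abs_sin_sub_int u (round u)]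
  unfold distToInt
  have := Real.abs_sin_le_abs (x := π * (u - round u))
  rw [abs_mul, abs_of_pos pi_pos] at this
  linarith

lemma sn_sq (u : ℝ) : sn u ^ 2 = 2 - 2 * Real.cos (2 * π * u) := by
  unfold sn
  rw [sq_abs, show 2 * π * u = 2 * (π * u) by ring, Real.cos_two_mul]
  nlinarith [Real.sin_sq_add_cos_sq (π * u)]

lemma sn_neg (u : ℝ) : sn (-u) = sn u := by
  unfold sn; rw [mul_neg, Real.sin_neg, mul_neg, abs_neg]

lemma cos_sub_cos_sn (a b : ℝ) :
    |Real.cos (2 * π * a) - Real.cos (2 * π * b)| = (1 / 2) * (sn (a + b) * sn (a - b)) := by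
  rw [Real.cos_sub_cos]
  unfold sn
  rw [← abs_mul]
  rw [show (2 * π * a + 2 * π * b) / 2 = π * (a + b) by ring,
    show (2 * π * a - 2 * π * b) / 2 = π * (a - b) by ring]
  rw [show -2 * Real.sin (π * (a + b)) * Real.sin (π * (a - b)) =
    -((1 / 2) * (2 * Real.sin (π * (a + b)) * (2 * Real.sin (π * (a - b))))) by ring, abs_neg,
    abs_mul]
  norm_num

/-- `wr r u = |1 - r e^{2π i u}|^2`. -/
def wr (r u : ℝ) : ℝ := (1 - r) ^ 2 + r * sn u ^ 2

lemma wr_ge {r : ℝ} (hr : 0 < r) (u : ℝ) : (1 - r) ^ 2 ≤ wr r u := by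
  unfold wr; nlinarith [sq_nonneg (sn u)]

lemma wr_pos {r : ℝ} (hr : 0 < r) (hr1 : r < 1) (u : ℝ) : 0 < wr r u :=
  lt_of_lt_of_le (by nlinarith [sub_pos.2 hr1]) (wr_ge hr u)

lemma wr_le {r : ℝ} (hr : 0 < r) (hr1 : r < 1) (u : ℝ) : wr r u ≤ 5 := by
  unfold wr
  have h1 := sn_le_two u
  have h0 := sn_nonneg u
  have : sn u ^ 2 ≤ 4 := by nlinarith
  nlinarith

lemma hasSum_log_wr {r : ℝ} (hr : 0 < r) (hr1 : r < 1) (u : ℝ) :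
    HasSum (fun m : ℕ => r ^ m / m * Real.cos (2 * π * m * u)) (-(1 / 2) * Real.log (wr r u)) := by
  have hz : ‖(r : ℂ) * Complex.exp ((2 * π * u : ℝ) * Complex.I)‖ < 1 := by
    rw [norm_mul, Complex.norm_exp_ofReal_mul_I, Complex.norm_real, Real.norm_eq_abs,
      abs_of_pos hr, mul_one]; exact hr1
  have h := Complex.hasSum_re (Complex.hasSum_taylorSeries_neg_log hz)
  convert h using 1
  · funext m
    rw [mul_pow, ← Complex.exp_nat_mul]
    have : (m : ℂ) * ((2 * π * u : ℝ) * Complex.I) = ((2 * π * m * u : ℝ) : ℂ) * Complex.I := by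
      push_cast; ring
    rw [this]
    have h2 : (r : ℂ) ^ m * Complex.exp (((2 * π * m * u : ℝ) : ℂ) * Complex.I) / (m : ℂ)
      = ((r ^ m / m : ℝ) : ℂ) * Complex.exp (((2 * π * m * u : ℝ) : ℂ) * Complex.I) := by
      push_cast; ring
    rw [h2, Complex.re_ofReal_mul, Complex.exp_ofReal_mul_I_re]
  · rw [Complex.neg_re, Complex.log_re]
    have h3 : wr r u = ‖1 - (r : ℂ) * Complex.exp ((2 * π * u : ℝ) * Complex.I)‖ ^ 2 := by
      rw [Complex.sq_norm, Complex.normSq_apply]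
      simp only [Complex.sub_re, Complex.one_re, Complex.re_ofReal_mul, Complex.sub_im,
        Complex.one_im, Complex.im_ofReal_mul, Complex.exp_ofReal_mul_I_re,
        Complex.exp_ofReal_mul_I_im]
      unfold wr
      rw [sn_sq]
      nlinarith [Real.sin_sq_add_cos_sq (2 * π * u)]
    rw [h3, Real.log_pow]; push_cast; ring

lemma sum_Ico_int (f : ℤ → ℝ) (a : ℤ) (N : ℕ) :
    ∑ i ∈ Finset.Ico a (a + N), f i = ∑ i ∈ Finset.range N, f (a + i) := by
  refine Finset.sum_bij' (fun i _ => (i - a).toNat) (fun i _ => a + i) ?_ ?_ ?_ ?_ ?_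
  · intro i hi; simp only [Finset.mem_Ico, Finset.mem_range] at *; omega
  · intro i hi; simp only [Finset.mem_Ico, Finset.mem_range] at *; omega
  · intro i hi; simp only [Finset.mem_Ico] at *; omega
  · intro i hi; simp
  · intro i hi; simp only [Finset.mem_Ico] at *; congr 1; omega

lemma dioph_sn {α κ τ : ℝ}
    (h : ∀ k : ℤ, k ≠ 0 → τ / |(k : ℝ)| ^ κ ≤ distToInt (k * α)) (m : ℕ) (hm : m ≠ 0) :
    τ / (m : ℝ) ^ κ ≤ sn (m * α) := by
  have h1 := h (m : ℤ) (by exact_mod_cast hm)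
  have h2 := sn_ge ((m : ℝ) * α)
  have h3 := dti_nonneg ((m : ℝ) * α)
  simp only [Int.cast_natCast, Nat.abs_cast] at h1
  linarith

lemma cohom_bound {α : ℝ} (hα : IsDiophantine α) {r : ℝ} (hr : 0 < r) (hr1 : r < 1) :
    ∃ C : ℝ, ∀ (t : ℝ) (a : ℤ) (N : ℕ),
      |∑ i ∈ Finset.Ico a (a + N), Real.log (wr r (t + i * α))| ≤ C := by
  obtain ⟨κ, τ, hκ, hτ, h⟩ := hα
  obtain ⟨K, hK⟩ := exists_nat_ge κ
  let T : ℝ → ℕ → ℝ := fun u m =>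
    r ^ m / m * (Real.sin (2 * π * m * u - π * (m * α)) / (2 * Real.sin (π * (m * α))))
  have hsum : Summable (fun m : ℕ => ((m : ℝ) ^ K * r ^ m) * (1 / τ)) :=
    (summable_pow_mul_geometric_of_norm_lt_one K (r := r)
      (by rw [Real.norm_eq_abs, abs_of_pos hr]; exact hr1)).mul_right _
  have hsne : ∀ m : ℕ, m ≠ 0 → 0 < sn (m * α) := fun m hm =>
    lt_of_lt_of_le (by positivity) (dioph_sn h m hm)
  have hT : ∀ u m, ‖T u m‖ ≤ ((m : ℝ) ^ K * r ^ m) * (1 / τ) := by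
    intro u m
    rcases Nat.eq_zero_or_pos m with rfl | hm
    · simp [T]; positivity
    have hm1 : (1 : ℝ) ≤ m := by exact_mod_cast hm
    have hs := dioph_sn h m hm.ne'
    have hs0 := hsne m hm.ne'
    have hpow : (m : ℝ) ^ κ ≤ (m : ℝ) ^ K := by
      rw [← Real.rpow_natCast]; exact Real.rpow_le_rpow_of_exponent_le hm1 hK
    have hpos : 0 < (m : ℝ) ^ κ := by positivity
    simp only [T]
    rw [norm_mul, norm_div, norm_div, Real.norm_eq_abs, Real.norm_eq_abs, Real.norm_eq_abs,
      Real.norm_eq_abs]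
    change _ * (_ / sn (m * α)) ≤ _
    have e1 : |r ^ m| / |(m : ℝ)| ≤ r ^ m := by
      rw [abs_of_pos (by positivity), abs_of_pos (by positivity)]
      exact div_le_self (by positivity) hm1
    have e2 : |Real.sin (2 * π * m * u - π * (m * α))| / sn (m * α) ≤ (m : ℝ) ^ K / τ := by
      rw [div_le_div_iff₀ hs0 hτ]
      have := abs_sin_le_one (2 * π * m * u - π * (m * α))
      have h4 : τ ≤ sn (m * α) * (m : ℝ) ^ κ := by rwa [div_le_iff₀ hpos] at hs
      have h5 : sn (m * α) * (m : ℝ) ^ κ ≤ (m : ℝ) ^ K * sn (m * α) := by nlinarith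
      nlinarith
    calc _ ≤ r ^ m * ((m : ℝ) ^ K / τ) := by gcongr
      _ = _ := by ring
  have hTs : ∀ u, Summable (T u) := fun u => Summable.of_norm_bounded hsum (hT u)
  set S := ∑' m : ℕ, ((m : ℝ) ^ K * r ^ m) * (1 / τ) with hS
  have hH : ∀ u, |∑' m, T u m| ≤ S := fun u => tsum_of_norm_bounded hsum.hasSum (hT u)
  have hcoh : ∀ u, Real.log (wr r u) = -2 * ((∑' m, T (u + α) m) - ∑' m, T u m) := by
    intro u
    have h1 := hasSum_log_wr hr hr1 u
    have h2 := (hTs (u + α)).hasSum.sub (hTs u).hasSum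
    have h3 : (fun m => T (u + α) m - T u m) =
        (fun m : ℕ => r ^ m / m * Real.cos (2 * π * m * u)) := by
      funext m
      rcases Nat.eq_zero_or_pos m with rfl | hm
      · simp [T]
      have hs0 := hsne m hm.ne'
      have hne : 2 * Real.sin (π * (m * α)) ≠ 0 := by
        unfold sn at hs0; exact abs_pos.1 hs0
      simp only [T]
      rw [← mul_sub, ← sub_div]
      congr 1
      rw [div_eq_iff hne]
      rw [show 2 * π * m * (u + α) - π * (m * α) = 2 * π * m * u + π * (m * α) by ring,
        Real.sin_add, Real.sin_sub]
      ring
    rw [h3] at h2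
    have := h1.unique h2
    linarith
  refine ⟨4 * S, fun t a N => ?_⟩
  have key : ∑ i ∈ Finset.Ico a (a + N), Real.log (wr r (t + i * α)) =
      -2 * ((∑' m, T (t + (a + N) * α) m) - ∑' m, T (t + a * α) m) := by
    rw [sum_Ico_int]
    induction N with
    | zero => simp
    | succ n ih =>
      rw [Finset.sum_range_succ, ih, hcoh]
      push_cast
      rw [show t + ((a : ℝ) + n) * α + α = t + (a + (n + 1)) * α by ring]
      ring
  rw [key, abs_mul]
  have := abs_sub (∑' m, T (t + (a + N) * α) m) (∑' m, T (t + a * α) m)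
  have h1 := hH (t + (a + N) * α)
  have h2 := hH (t + a * α)
  rw [show |(-2 : ℝ)| = 2 by norm_num]
  linarith

/-- upper bound for products of sines over a block with (possibly) one term removed. -/
lemma prod_upper {α : ℝ} (hα : IsDiophantine α) {ε : ℝ} (hε : 0 < ε) :
    ∃ C : ℝ, ∀ (t : ℝ) (a : ℤ) (N : ℕ) (j : ℤ),
      ∏ i ∈ (Finset.Ico a (a + N)).erase j, sn (t + i * α) ≤ Real.exp (ε * N + C) := by
  set r := Real.exp (-(2 * ε)) with hr
  have hr0 : 0 < r := Real.exp_pos _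
  have hr1 : r < 1 := by rw [hr, Real.exp_lt_one_iff]; linarith
  obtain ⟨C, hC⟩ := cohom_bound hα hr0 hr1
  refine ⟨C / 2 + |Real.log ((1 - r) ^ 2)|, fun t a N j => ?_⟩
  have hle : ∀ u, sn u ≤ Real.exp (ε + Real.log (wr r u) / 2) := by
    intro u
    have hw := wr_pos hr0 hr1 u
    refine (sq_le_sq₀ (sn_nonneg _) (Real.exp_pos _).le).1 ?_
    rw [← Real.exp_nat_mul]
    have : ((2 : ℕ) : ℝ) * (ε + Real.log (wr r u) / 2) = 2 * ε + Real.log (wr r u) := by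
      push_cast; ring
    rw [this, Real.exp_add, Real.exp_log hw]
    have h2 : r * sn u ^ 2 ≤ wr r u := by unfold wr; nlinarith [sq_nonneg (1 - r)]
    have h3 : Real.exp (2 * ε) * r = 1 := by rw [hr, ← Real.exp_add]; simp
    calc sn u ^ 2 = Real.exp (2 * ε) * (r * sn u ^ 2) := by rw [← mul_assoc, h3, one_mul]
      _ ≤ _ := by gcongr
  calc ∏ i ∈ (Finset.Ico a (a + N)).erase j, sn (t + i * α)
      ≤ ∏ i ∈ (Finset.Ico a (a + N)).erase j,
          Real.exp (ε + Real.log (wr r (t + i * α)) / 2) :=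
        Finset.prod_le_prod (fun i _ => sn_nonneg _) (fun i _ => hle _)
    _ = Real.exp (∑ i ∈ (Finset.Ico a (a + N)).erase j,
          (ε + Real.log (wr r (t + i * α)) / 2)) := (Real.exp_sum _ _).symm
    _ ≤ _ := by
      apply Real.exp_le_exp.2
      have hc := abs_le.1 (hC t a N)
      have hsum : ∑ i ∈ Finset.Ico a (a + (N : ℤ)), (ε + Real.log (wr r (t + i * α)) / 2)
          = ε * N + (∑ i ∈ Finset.Ico a (a + (N : ℤ)), Real.log (wr r (t + i * α))) / 2 := by
        rw [Finset.sum_add_distrib, Finset.sum_div]; simp; ring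
      by_cases hj : j ∈ Finset.Ico a (a + (N : ℤ))
      · have := Finset.add_sum_erase _ (fun i : ℤ => ε + Real.log (wr r (t + i * α)) / 2) hj
        have hwj := wr_ge hr0 (t + j * α)
        have hl : Real.log ((1 - r) ^ 2) ≤ Real.log (wr r (t + j * α)) :=
          Real.log_le_log (by have := sub_pos.2 hr1; positivity) hwj
        have := neg_abs_le (Real.log ((1 - r) ^ 2))
        have := abs_nonneg (Real.log ((1 - r) ^ 2))
        linarith
      · rw [Finset.erase_eq_of_notMem hj, hsum]
        have := abs_nonneg (Real.log ((1 - r) ^ 2))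
        linarith

lemma count_small {α κ τ : ℝ} (hκ : 0 < κ) (hτ : 0 < τ)
    (h : ∀ k : ℤ, k ≠ 0 → τ / |(k : ℝ)| ^ κ ≤ distToInt (k * α)) (N : ℕ) {r : ℝ} (hr : 0 < r) :
    (((Finset.Icc 1 N).filter (fun n : ℕ => distToInt (n * α) < r)).card : ℝ)
      ≤ N * (2 * r / τ) ^ (1 / κ) := by
  set X := (τ / (2 * r)) ^ (1 / κ) with hX
  have hX0 : 0 < X := by positivity
  set M := ⌈X⌉₊ with hM
  have hM0 : 0 < M := Nat.ceil_pos.2 hX0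
  have hgap : ∀ n : ℕ, n ≠ 0 → distToInt (n * α) < 2 * r → M ≤ n := by
    intro n hn hd
    have h1 := h n (by exact_mod_cast hn)
    simp only [Int.cast_natCast, Nat.abs_cast] at h1
    have hn0 : (0 : ℝ) < n := by exact_mod_cast Nat.pos_of_ne_zero hn
    have h2 : τ / (n : ℝ) ^ κ < 2 * r := lt_of_le_of_lt h1 hd
    have hp : 0 < (n : ℝ) ^ κ := by positivity
    rw [div_lt_iff₀ hp] at h2
    have h3 : τ / (2 * r) < (n : ℝ) ^ κ := by rw [div_lt_iff₀ (by positivity)]; linarith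
    have h4 : X < n := by
      have := Real.rpow_lt_rpow (by positivity) h3 (show 0 < 1 / κ by positivity)
      rwa [← Real.rpow_mul hn0.le, mul_one_div_cancel hκ.ne', Real.rpow_one] at this
    exact Nat.ceil_le.2 h4.le
  have hcard : ((Finset.Icc 1 N).filter (fun n : ℕ => distToInt (n * α) < r)).card ≤ N / M := by
    have : ((Finset.Icc 1 N).filter (fun n : ℕ => distToInt (n * α) < r)).card
        ≤ (Finset.Icc 1 (N / M)).card := by
      apply Finset.card_le_card_of_injOn (fun n => n / M)
      · intro n hn
        simp only [Finset.coe_filter, Finset.mem_Icc, Set.mem_ofPred_eq, Finset.coe_Icc,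
          Set.mem_Icc] at *
        refine ⟨?_, Nat.div_le_div_right hn.1.2⟩
        exact (Nat.one_le_div_iff hM0).2 (hgap n (by omega) (by linarith [hn.2]))
      · have key : ∀ n n' : ℕ, distToInt (n * α) < r → distToInt (n' * α) < r → n < n' →
            n / M < n' / M := by
          intro n n' h1 h2 hlt
          have h3 : distToInt (((n' - n : ℕ) : ℝ) * α) < 2 * r := by
            rw [Nat.cast_sub hlt.le, sub_mul]
            linarith [dti_sub (n' * α) (n * α)]
          have h4 := hgap (n' - n) (by omega) h3
          have : n / M + 1 ≤ n' / M := by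
            rw [← Nat.add_div_right _ hM0]
            exact Nat.div_le_div_right (by omega)
          omega
        intro n hn n' hn' heq
        simp only [Finset.coe_filter, Finset.mem_Icc, Set.mem_ofPred_eq] at *
        rcases lt_trichotomy n n' with hlt | he | hlt
        · have := key n n' hn.2 hn'.2 hlt; omega
        · exact he
        · have := key n' n hn'.2 hn.2 hlt; omega
    simpa using this
  have h5 : ((N / M : ℕ) : ℝ) ≤ N / M := Nat.cast_div_le
  have h6 : (N : ℝ) / M ≤ N / X := by
    have : X ≤ M := Nat.le_ceil X
    gcongr
  have h7 : (N : ℝ) / X = N * (2 * r / τ) ^ (1 / κ) := by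
    rw [hX, div_eq_mul_inv, ← Real.inv_rpow (by positivity), inv_div]
  calc _ ≤ ((N / M : ℕ) : ℝ) := by exact_mod_cast hcard
    _ ≤ _ := by linarith

lemma log_dyadic {s d : ℝ} (hs : 0 < s) (hs1 : s ≤ 1) (hd : 0 < d) :
    ∀ L : ℕ, s * (1 / 2) ^ L ≤ d →
    Real.log (1 + (s ^ 2) ^ 2 / d ^ 2) ≤ s ^ 2 +
      3 * ∑ l ∈ Finset.range L, (if d < s * (1 / 2) ^ l then (1 : ℝ) else 0) := by
  intro L
  induction L with
  | zero =>
    intro h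
    simp only [pow_zero, mul_one] at h
    have h1 : Real.log (1 + (s ^ 2) ^ 2 / d ^ 2) ≤ (s ^ 2) ^ 2 / d ^ 2 := by
      have := Real.log_le_sub_one_of_pos (show 0 < 1 + (s ^ 2) ^ 2 / d ^ 2 by positivity)
      linarith
    have h2 : (s ^ 2) ^ 2 / d ^ 2 ≤ s ^ 2 := by
      rw [div_le_iff₀ (by positivity)]
      have : s ^ 2 ≤ d ^ 2 := by gcongr
      nlinarith [sq_nonneg s]
    simp; linarith
  | succ L ih =>
    intro h
    by_cases hL : s * (1 / 2) ^ L ≤ d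
    · have := ih hL
      rw [Finset.sum_range_succ]
      have : (0 : ℝ) ≤ if d < s * (1 / 2) ^ L then (1 : ℝ) else 0 := by split_ifs <;> norm_num
      linarith
    · push Not at hL
      have hall : ∑ l ∈ Finset.range (L + 1), (if d < s * (1 / 2) ^ l then (1 : ℝ) else 0)
          = ((L + 1 : ℕ) : ℝ) := by
        rw [Finset.sum_congr rfl (g := fun _ => (1 : ℝ))]
        · simp
        · intro l hl
          rw [if_pos]
          refine lt_of_lt_of_le hL ?_
          have : ((1 : ℝ) / 2) ^ L ≤ (1 / 2) ^ l :=
            pow_le_pow_of_le_one (by norm_num) (by norm_num)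
              (by simp at hl; omega)
          gcongr
      rw [hall]
      have h4 : (s ^ 2) ^ 2 / d ^ 2 ≤ 4 ^ (L + 1) := by
        rw [div_le_iff₀ (by positivity)]
        have h5 : (s * (1 / 2) ^ (L + 1)) ^ 2 ≤ d ^ 2 := by gcongr
        have h6 : (4 : ℝ) ^ (L + 1) * (s * (1 / 2) ^ (L + 1)) ^ 2 = s ^ 2 := by
          rw [mul_pow, ← pow_mul, mul_comm (L + 1) 2, pow_mul]
          rw [mul_left_comm, ← mul_pow]; norm_num
        have h7 : (s ^ 2) ^ 2 ≤ s ^ 2 := by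
          have : s ^ 2 ≤ 1 := by nlinarith
          nlinarith [sq_nonneg s]
        calc _ ≤ s ^ 2 := h7
          _ = _ := h6.symm
          _ ≤ _ := by gcongr
      have h8 : (1 : ℝ) ≤ 4 ^ (L + 1) := one_le_pow₀ (by norm_num)
      have h9 : Real.log (1 + (s ^ 2) ^ 2 / d ^ 2) ≤ Real.log (2 * 4 ^ (L + 1)) := by
        apply Real.log_le_log (by positivity); linarith
      rw [Real.log_mul (by norm_num) (by positivity), Real.log_pow,
        show (4 : ℝ) = 2 ^ 2 by norm_num, Real.log_pow] at h9
      have h10 := Real.log_two_lt_d9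
      have h11 : (1 : ℝ) ≤ ((L + 1 : ℕ) : ℝ) := by push_cast; linarith [Nat.cast_nonneg (α := ℝ) L]
      push_cast at *
      nlinarith [sq_nonneg s]

lemma sum_log_small {α : ℝ} (hα : IsDiophantine α) {ε : ℝ} (hε : 0 < ε) :
    ∃ ρ : ℝ, 0 < ρ ∧ ρ < 1 ∧ ∀ N : ℕ,
      ∑ n ∈ Finset.Icc 1 N, Real.log (1 + ρ ^ 2 / distToInt (n * α) ^ 2) ≤ ε * N := by
  obtain ⟨κ, τ, hκ, hτ, h⟩ := hα
  set q : ℝ := (1 / 2 : ℝ) ^ (1 / κ) with hq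
  have hq0 : 0 < q := by positivity
  have hq1 : q < 1 := Real.rpow_lt_one (by norm_num) (by norm_num) (by positivity)
  set A := (2 / τ) ^ (1 / κ) with hA
  have hA0 : 0 < A := by positivity
  have hlim : Tendsto (fun s : ℝ => s ^ 2 + 3 * (A * s ^ (1 / κ) * (1 - q)⁻¹)) (nhds 0)
      (nhds (0 ^ 2 + 3 * (A * 0 ^ (1 / κ) * (1 - q)⁻¹))) := by
    apply Continuous.tendsto
    have : Continuous (fun s : ℝ => s ^ (1 / κ)) := Real.continuous_rpow_const (by positivity)
    fun_prop
  rw [Real.zero_rpow (by positivity)] at hlim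
  simp only [ne_eq, OfNat.ofNat_ne_zero, not_false_eq_true, zero_pow, mul_zero, zero_mul,
    add_zero] at hlim
  have hev := (hlim.mono_left (nhdsWithin_le_nhds (s := Set.Ioi 0))).eventually (gt_mem_nhds hε)
  have hev2 : ∀ᶠ s : ℝ in nhdsWithin 0 (Set.Ioi 0), s < 1 :=
    nhdsWithin_le_nhds (gt_mem_nhds one_pos)
  obtain ⟨s, ⟨hs1, hs2⟩, hs0⟩ := ((hev.and hev2).and self_mem_nhdsWithin).exists
  replace hs0 : 0 < s := hs0
  refine ⟨s ^ 2, by positivity, by nlinarith, fun N => ?_⟩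
  have hdpos : ∀ n ∈ Finset.Icc 1 N, 0 < distToInt ((n : ℝ) * α) := by
    intro n hn
    simp only [Finset.mem_Icc] at hn
    have h1 := h n (by exact_mod_cast (by omega : n ≠ 0))
    simp only [Int.cast_natCast, Nat.abs_cast] at h1
    have hn0 : (0 : ℝ) < n := by exact_mod_cast hn.1
    exact lt_of_lt_of_le (by positivity) h1
  obtain ⟨L, hL⟩ : ∃ L : ℕ, ∀ n ∈ Finset.Icc 1 N, s * (1 / 2) ^ L ≤ distToInt ((n : ℝ) * α) := by
    have : ∀ᶠ L : ℕ in atTop, ∀ n ∈ Finset.Icc 1 N,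
        s * (1 / 2) ^ L ≤ distToInt ((n : ℝ) * α) := by
      rw [Filter.eventually_all_finset]
      intro n hn
      have ht : Tendsto (fun L : ℕ => s * (1 / 2 : ℝ) ^ L) atTop (nhds (s * 0)) :=
        (tendsto_pow_atTop_nhds_zero_of_lt_one (by norm_num) (by norm_num)).const_mul _
      rw [mul_zero] at ht
      filter_upwards [ht.eventually (gt_mem_nhds (hdpos n hn))] with L hL using hL.le
    exact this.exists
  calc _ ≤ ∑ n ∈ Finset.Icc 1 N, (s ^ 2 + 3 * ∑ l ∈ Finset.range L,
          (if distToInt ((n : ℝ) * α) < s * (1 / 2) ^ l then (1 : ℝ) else 0)) :=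
        Finset.sum_le_sum (fun n hn => log_dyadic hs0 hs2.le (hdpos n hn) L (hL n hn))
    _ = s ^ 2 * N + 3 * ∑ l ∈ Finset.range L, (((Finset.Icc 1 N).filter
          (fun n : ℕ => distToInt (n * α) < s * (1 / 2) ^ l)).card : ℝ) := by
        rw [Finset.sum_add_distrib, ← Finset.mul_sum, Finset.sum_comm]
        simp only [Finset.sum_boole, Finset.sum_const, Nat.card_Icc, nsmul_eq_mul,
          Nat.add_sub_cancel]
        rw [mul_comm (N : ℝ)]
    _ ≤ s ^ 2 * N + 3 * ∑ l ∈ Finset.range L, (N * (A * s ^ (1 / κ)) * q ^ l) := by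
        gcongr with l hl
        refine (count_small hκ hτ h N (by positivity)).trans (le_of_eq ?_)
        rw [show 2 * (s * (1 / 2) ^ l) / τ = (2 / τ) * s * (1 / 2) ^ l by ring,
          Real.mul_rpow (by positivity) (by positivity), Real.mul_rpow (by positivity) hs0.le,
          hq, ← Real.rpow_natCast, ← Real.rpow_natCast, ← Real.rpow_mul (by norm_num),
          ← Real.rpow_mul (by norm_num), mul_comm (l : ℝ)]
        ring
    _ ≤ s ^ 2 * N + 3 * (N * (A * s ^ (1 / κ)) * (1 - q)⁻¹) := by
        rw [← Finset.mul_sum]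
        gcongr
        rw [← tsum_geometric_of_lt_one hq0.le hq1]
        exact Summable.sum_le_tsum _ (fun i _ => by positivity)
          (summable_geometric_of_lt_one hq0.le hq1)
    _ = (s ^ 2 + 3 * (A * s ^ (1 / κ) * (1 - q)⁻¹)) * N := by ring
    _ ≤ _ := by gcongr

lemma sum_int_le_nat (F : ℕ → ℝ) (hF : ∀ n, 0 ≤ F n) (a : ℤ) (N : ℕ) (i0 : ℤ)
    (hi0 : i0 ∈ Finset.Ico a (a + N)) :
    ∑ i ∈ (Finset.Ico a (a + (N : ℤ))).erase i0, F (i - i0).natAbs ≤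
      2 * ∑ n ∈ Finset.Icc 1 N, F n := by
  have hi := Finset.mem_Ico.1 hi0
  have hsub : (Finset.Ico a (a + (N : ℤ))).erase i0 =
      (Finset.Ico a i0) ∪ (Finset.Ioo i0 (a + N)) := by
    ext i; simp only [Finset.mem_erase, Finset.mem_Ico, Finset.mem_union, Finset.mem_Ioo]; omega
  have hdis : Disjoint (Finset.Ico a i0) (Finset.Ioo i0 (a + N)) := by
    rw [Finset.disjoint_left]; intro i; simp only [Finset.mem_Ico, Finset.mem_Ioo]; omega
  have gen : ∀ S : Finset ℤ, (∀ i ∈ S, (i - i0).natAbs ∈ Finset.Icc 1 N) →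
      Set.InjOn (fun i : ℤ => (i - i0).natAbs) S →
      ∑ i ∈ S, F (i - i0).natAbs ≤ ∑ n ∈ Finset.Icc 1 N, F n := by
    intro S h1 h2
    rw [← Finset.sum_image (f := F) h2]
    apply Finset.sum_le_sum_of_subset_of_nonneg
    · intro n hn
      obtain ⟨i, hi, rfl⟩ := Finset.mem_image.1 hn
      exact h1 i hi
    · intro n _ _; exact hF n
  rw [hsub, Finset.sum_union hdis, two_mul]
  apply add_le_add
  · apply gen
    · intro i hi; simp only [Finset.mem_Ico, Finset.mem_Icc] at *; omega
    · intro i hi j hj hij; simp only [Finset.coe_Ico, Set.mem_Ico] at *; omega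
  · apply gen
    · intro i hi; simp only [Finset.mem_Ico, Finset.mem_Ioo, Finset.mem_Icc] at *; omega
    · intro i hi j hj hij; simp only [Finset.coe_Ioo, Set.mem_Ioo] at *; omega

lemma dti_natAbs (z : ℤ) (α : ℝ) : distToInt ((z.natAbs : ℝ) * α) = distToInt (z * α) := by
  rcases Int.natAbs_eq z with h | h
  · conv_rhs => rw [h]
    simp
  · conv_rhs => rw [h]
    push_cast
    rw [neg_mul, dti_neg]
    simp

lemma dioph_pos {α : ℝ} (hα : IsDiophantine α) (k : ℤ) (hk : k ≠ 0) : 0 < distToInt (k * α) := by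
  obtain ⟨κ, τ, hκ, hτ, h⟩ := hα
  have : (k : ℝ) ≠ 0 := by exact_mod_cast hk
  exact lt_of_lt_of_le (by positivity) (h k hk)

lemma prod_lower_aux {α : ℝ} (hα : IsDiophantine α) {ε : ℝ} (hε : 0 < ε) :
    ∃ C : ℝ, 0 ≤ C ∧ ∀ (t : ℝ) (a : ℤ) (N : ℕ) (i0 : ℤ), i0 ∈ Finset.Ico a (a + N) →
      (∀ i ∈ Finset.Ico a (a + (N : ℤ)), distToInt (t + i0 * α) ≤ distToInt (t + i * α)) →
      Real.exp (-(ε * N + C)) ≤ ∏ i ∈ (Finset.Ico a (a + N)).erase i0, sn (t + i * α) := by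
  obtain ⟨ρ, hρ0, hρ1, hρ⟩ := sum_log_small hα hε
  set r := 1 - ρ with hr
  have hr0 : 0 < r := by linarith
  have hr1 : r < 1 := by linarith
  obtain ⟨C, hC⟩ := cohom_bound hα hr0 hr1
  have hC0 : 0 ≤ C := (abs_nonneg _).trans (hC 0 0 0)
  have hl5 : 0 ≤ Real.log 5 := Real.log_nonneg (by norm_num)
  refine ⟨C / 2 + Real.log 5, by positivity, fun t a N i0 hi0 hmin => ?_⟩
  set F : ℕ → ℝ := fun n => Real.log (1 + ρ ^ 2 / distToInt (n * α) ^ 2) with hF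
  have hF0 : ∀ n, 0 ≤ F n := fun n => Real.log_nonneg (by
    have : 0 ≤ ρ ^ 2 / distToInt (n * α) ^ 2 := by positivity
    linarith)
  have hterm : ∀ i ∈ (Finset.Ico a (a + (N : ℤ))).erase i0,
      Real.exp (Real.log (wr r (t + i * α)) / 2 - F (i - i0).natAbs / 2) ≤ sn (t + i * α) := by
    intro i hi
    rw [Finset.mem_erase] at hi
    set u := t + i * α with hu
    have hD : 0 < distToInt (((i - i0 : ℤ) : ℝ) * α) := dioph_pos hα _ (sub_ne_zero.2 hi.1)
    have h1 : distToInt (((i - i0 : ℤ) : ℝ) * α) ≤ 2 * distToInt u := by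
      have := dti_sub u (t + i0 * α)
      rw [show u - (t + i0 * α) = ((i - i0 : ℤ) : ℝ) * α by rw [hu]; push_cast; ring] at this
      linarith [hmin i hi.2]
    have h2 := sn_ge u
    have h3 : distToInt (((i - i0 : ℤ) : ℝ) * α) ≤ sn u := by linarith
    simp only [hF]
    rw [dti_natAbs]
    set D := distToInt (((i - i0 : ℤ) : ℝ) * α)
    have hs0 : 0 < sn u := lt_of_lt_of_le hD h3
    refine (sq_le_sq₀ (Real.exp_pos _).le (sn_nonneg _)).1 ?_
    rw [← Real.exp_nat_mul]
    have hw := wr_pos hr0 hr1 u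
    rw [show ((2 : ℕ) : ℝ) * (Real.log (wr r u) / 2 - Real.log (1 + ρ ^ 2 / D ^ 2) / 2)
      = Real.log (wr r u) - Real.log (1 + ρ ^ 2 / D ^ 2) by push_cast; ring, Real.exp_sub,
      Real.exp_log hw, Real.exp_log (by positivity), div_le_iff₀ (by positivity)]
    have h4 : ρ ^ 2 ≤ sn u ^ 2 * (ρ ^ 2 / D ^ 2) := by
      rw [mul_div_assoc', le_div_iff₀ (by positivity), mul_comm]
      gcongr
    have h5 : wr r u ≤ ρ ^ 2 + sn u ^ 2 := by
      unfold wr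
      rw [hr]; nlinarith [sq_nonneg (sn u)]
    linarith
  calc Real.exp (-(ε * N + (C / 2 + Real.log 5)))
      ≤ Real.exp (∑ i ∈ (Finset.Ico a (a + (N : ℤ))).erase i0,
        (Real.log (wr r (t + i * α)) / 2 - F (i - i0).natAbs / 2)) := by
        apply Real.exp_le_exp.2
        rw [Finset.sum_sub_distrib, ← Finset.sum_div, ← Finset.sum_div]
        have h1 := sum_int_le_nat F hF0 a N i0 hi0
        have h2 := hρ N
        have h3 := Finset.add_sum_erase _ (fun i : ℤ => Real.log (wr r (t + i * α))) hi0
        have h4 : Real.log (wr r (t + i0 * α)) ≤ Real.log 5 :=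
          Real.log_le_log (wr_pos hr0 hr1 _) (wr_le hr0 hr1 _)
        have h5 := (abs_le.1 (hC t a N)).1
        linarith
    _ = ∏ i ∈ (Finset.Ico a (a + (N : ℤ))).erase i0,
        Real.exp (Real.log (wr r (t + i * α)) / 2 - F (i - i0).natAbs / 2) := Real.exp_sum _ _
    _ ≤ _ := Finset.prod_le_prod (fun i _ => (Real.exp_pos _).le) hterm

lemma prod_lower {α : ℝ} (hα : IsDiophantine α) {ε : ℝ} (hε : 0 < ε) :
    ∃ C : ℝ, 0 ≤ C ∧ ∀ (t : ℝ) (a : ℤ) (N : ℕ) (j : ℤ) (η : ℝ), 0 < η → η ≤ 1 →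
      (∀ i ∈ (Finset.Ico a (a + (N : ℤ))).erase j, η ≤ sn (t + i * α)) →
      η * Real.exp (-(ε * N + C)) ≤ ∏ i ∈ (Finset.Ico a (a + N)).erase j, sn (t + i * α) := by
  obtain ⟨C, hC0, hC⟩ := prod_lower_aux hα hε
  refine ⟨C + Real.log 2, by have := Real.log_nonneg (show (1 : ℝ) ≤ 2 by norm_num); linarith,
    fun t a N j η hη hη1 hsn => ?_⟩
  have hexp : Real.exp (-(ε * N + (C + Real.log 2))) = Real.exp (-(ε * N + C)) / 2 := by
    rw [show -(ε * N + (C + Real.log 2)) = -(ε * N + C) - Real.log 2 by ring, Real.exp_sub,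
      Real.exp_log (by norm_num)]
  rw [hexp]
  set X := Real.exp (-(ε * N + C)) with hX
  have hX0 : 0 < X := Real.exp_pos _
  have hX1 : X ≤ 1 := by
    rw [hX]; apply Real.exp_le_one_iff.2
    have : 0 ≤ ε * N := by positivity
    linarith
  rcases (Finset.Ico a (a + (N : ℤ))).eq_empty_or_nonempty with he | hne
  · rw [he]; simp; nlinarith
  obtain ⟨i0, hi0, hmin⟩ := Finset.exists_min_image (Finset.Ico a (a + (N : ℤ)))
    (fun i : ℤ => distToInt (t + i * α)) hne
  have h1 := hC t a N i0 hi0 hmin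
  rw [← hX] at h1
  set B := Finset.Ico a (a + (N : ℤ))
  set f : ℤ → ℝ := fun i => sn (t + i * α) with hf
  have hf0 : ∀ i, 0 ≤ f i := fun i => sn_nonneg _
  have hf2 : ∀ i, f i ≤ 2 := fun i => sn_le_two _
  change X ≤ ∏ i ∈ B.erase i0, f i at h1
  change _ ≤ ∏ i ∈ B.erase j, f i
  by_cases hij : i0 = j
  · subst hij; nlinarith
  have hfi0 : η ≤ f i0 := hsn i0 (Finset.mem_erase.2 ⟨hij, hi0⟩)
  have h2 : f i0 * ∏ i ∈ (B.erase j).erase i0, f i = ∏ i ∈ B.erase j, f i :=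
    Finset.mul_prod_erase _ f (Finset.mem_erase.2 ⟨hij, hi0⟩)
  have h3 : ∏ i ∈ B.erase i0, f i ≤ 2 * ∏ i ∈ (B.erase j).erase i0, f i := by
    have hp : 0 ≤ ∏ i ∈ (B.erase j).erase i0, f i := Finset.prod_nonneg (fun i _ => hf0 i)
    rw [Finset.erase_right_comm] at hp ⊢
    by_cases hj : j ∈ B.erase i0
    · rw [← Finset.mul_prod_erase _ f hj]
      exact mul_le_mul_of_nonneg_right (hf2 j) hp
    · rw [Finset.erase_eq_of_notMem hj] at hp ⊢
      linarith
  rw [← h2]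
  have h4 : X / 2 ≤ ∏ i ∈ (B.erase j).erase i0, f i := by linarith
  calc η * (X / 2) ≤ f i0 * ∏ i ∈ (B.erase j).erase i0, f i := by
        apply mul_le_mul hfi0 h4 (by positivity) (hf0 _)

def Dt (lam α E : ℝ) : ℕ → ℝ → ℝ
  | 0, _ => 1
  | 1, t => E - 2 * lam * Real.cos (2 * Real.pi * t)
  | k + 2, t => (E - 2 * lam * Real.cos (2 * Real.pi * (t + (k + 1) * α))) * Dt lam α E (k + 1) t
      - Dt lam α E k t

lemma Dt_zero (lam α E t : ℝ) : Dt lam α E 0 t = 1 := rfl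
lemma Dt_one (lam α E t : ℝ) : Dt lam α E 1 t = E - 2 * lam * Real.cos (2 * Real.pi * t) := rfl
lemma Dt_succ (lam α E : ℝ) (k : ℕ) (t : ℝ) : Dt lam α E (k + 2) t =
    (E - 2 * lam * Real.cos (2 * Real.pi * (t + (k + 1) * α))) * Dt lam α E (k + 1) t
      - Dt lam α E k t := rfl

lemma Dt_bound {lam α E : ℝ} (hl : 1 < lam) (hE : |E| ≤ 2 + 2 * lam) (k : ℕ) :
    ∀ t, |Dt lam α E k t| ≤ (3 + 4 * lam) ^ k := by
  have hv : ∀ t, |E - 2 * lam * Real.cos (2 * Real.pi * t)| ≤ 2 + 4 * lam := by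
    intro t
    have h1 := abs_sub E (2 * lam * Real.cos (2 * Real.pi * t))
    rw [abs_mul (2 * lam), abs_of_pos (by linarith : 0 < 2 * lam)] at h1
    have h2 := Real.abs_cos_le_one (2 * Real.pi * t)
    nlinarith
  induction k using Nat.twoStepInduction with
  | zero => intro t; simp [Dt_zero]
  | one => intro t; rw [Dt_one]; simp; linarith [hv t]
  | more k ih0 ih1 =>
    intro t
    rw [Dt_succ]
    set A := (3 + 4 * lam) ^ k with hA
    have hA0 : 0 < A := by positivity
    have h1 := ih1 t
    have h0 := ih0 t
    have hw := hv (t + (k + 1) * α)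
    rw [pow_succ, ← hA] at h1
    rw [pow_succ, pow_succ, ← hA]
    refine (abs_sub _ _).trans ?_
    rw [abs_mul]
    have : |E - 2 * lam * Real.cos (2 * Real.pi * (t + (k + 1) * α))| * |Dt lam α E (k + 1) t| ≤
      (2 + 4 * lam) * (A * (3 + 4 * lam)) := by gcongr
    nlinarith

lemma Dt_wronsk {lam α θ E : ℝ} {φ : ℤ → ℝ} (h : IsEigenfunction (amoPot lam α θ) E φ) (x : ℤ)
    (k : ℕ) : Dt lam α E (k + 1) (θ + x * α) * φ (x + k) - Dt lam α E k (θ + x * α) * φ (x + k + 1)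
      = φ (x - 1) := by
  induction k with
  | zero =>
    have := h x
    simp only [amoPot] at this
    rw [Dt_zero, zero_add, Dt_one]
    simp
    linarith
  | succ k ih =>
    have := h (x + k + 1)
    simp only [amoPot] at this
    rw [Dt_succ]
    rw [← ih]
    push_cast at this ⊢
    rw [show θ + x * α + (k + 1) * α = θ + (x + k + 1) * α by ring]
    rw [show x + k + 1 - 1 = x + (k : ℤ) by ring] at this
    rw [← add_assoc x]
    linear_combination Dt lam α E (k + 1) (θ + x * α) * (-this)

lemma Dt_cramer {lam α θ E : ℝ} {φ : ℤ → ℝ} (h : IsEigenfunction (amoPot lam α θ) E φ) (x : ℤ)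
    (p q : ℕ) : Dt lam α E (p + 1 + q) (θ + x * α) * φ (x + p) =
      Dt lam α E q (θ + (x + p + 1 : ℤ) * α) * φ (x - 1)
      + Dt lam α E p (θ + x * α) * φ (x + p + 1 + q) := by
  induction q using Nat.twoStepInduction with
  | zero =>
    have := Dt_wronsk h x p
    simp [Dt_zero]; linarith
  | one =>
    have h1 := Dt_wronsk h x p
    have h2 := h (x + p + 1)
    simp only [amoPot] at h2
    rw [show p + 1 + 1 = p + 2 by ring, Dt_succ, Dt_one]
    push_cast at h2 ⊢
    rw [show x + p + 1 - 1 = x + (p : ℤ) by ring] at h2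
    rw [show θ + x * α + (p + 1) * α = θ + (x + p + 1) * α by ring]
    linear_combination Dt lam α E p (θ + x * α) * (-h2) +
      (E - 2 * lam * Real.cos (2 * Real.pi * (θ + (x + p + 1) * α))) * h1
  | more q ih0 ih1 =>
    have h2 := h (x + p + 1 + q + 1)
    simp only [amoPot] at h2
    rw [show p + 1 + (q + 2) = (p + 1 + q) + 2 by ring, Dt_succ, Dt_succ lam α E q]
    rw [show p + 1 + (q + 1) = p + 1 + q + 1 by ring] at ih1
    push_cast at h2 ih0 ih1 ⊢
    rw [show x + p + 1 + q + 1 - 1 = x + (p : ℤ) + 1 + q by ring] at h2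
    rw [show x + p + 1 + q + 1 + 1 = x + (p : ℤ) + 1 + (q + 2) by ring] at h2
    rw [show x + p + 1 + q + 1 = x + (p : ℤ) + 1 + (q + 1) by ring] at h2
    rw [show θ + x * α + (p + 1 + q + 1) * α = θ + (x + p + 1 + q + 1) * α by ring,
      show θ + (x + p + 1) * α + (q + 1) * α = θ + (x + p + 1 + q + 1) * α by ring]
    linear_combination Dt lam α E p (θ + x * α) * (-h2) - ih0 +
      (E - 2 * lam * Real.cos (2 * Real.pi * (θ + (x + p + 1 + q + 1) * α))) * ih1

lemma Dt_left (lam α E : ℝ) (k : ℕ) : ∀ t, Dt lam α E (k + 2) t =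
    (E - 2 * lam * Real.cos (2 * Real.pi * t)) * Dt lam α E (k + 1) (t + α)
      - Dt lam α E k (t + 2 * α) := by
  induction k using Nat.twoStepInduction with
  | zero => intro t; simp [Dt_succ, Dt_zero, Dt_one]; ring
  | one => intro t; simp [Dt_succ, Dt_zero, Dt_one]; ring_nf
  | more k ih0 ih1 =>
    intro t
    rw [Dt_succ lam α E (k + 2) t, ih0, ih1, Dt_succ lam α E (k + 1) (t + α), Dt_succ lam α E k (t + 2 * α)]
    push_cast
    rw [show t + (k + 2 + 1) * α = t + α + (k + 1 + 1) * α by ring,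
      show t + 2 * α + (k + 1) * α = t + α + (k + 1 + 1) * α by ring]
    ring

lemma Dt_even (lam α E : ℝ) (k : ℕ) : ∀ t, Dt lam α E k (-t - (k - 1) * α) = Dt lam α E k t := by
  induction k using Nat.twoStepInduction with
  | zero => intro t; simp [Dt_zero]
  | one => intro t; simp [Dt_one]
  | more k ih0 ih1 =>
    intro t
    rw [Dt_left lam α E k t, Dt_succ, ← ih0 (t + 2 * α), ← ih1 (t + α)]
    push_cast
    rw [show -t - ((k : ℝ) + 2 - 1) * α + (k + 1) * α = -t by ring,
      show -(t + α) - ((k : ℝ) + 1 - 1) * α = -t - ((k : ℝ) + 2 - 1) * α by ring,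
      show -(t + 2 * α) - ((k : ℝ) - 1) * α = -t - ((k : ℝ) + 2 - 1) * α by ring, mul_neg, Real.cos_neg]

open Polynomial in
def TP (lam : ℝ) (k : ℕ) (f : ℝ → ℝ) (P Q : Polynomial ℝ) : Prop :=
  (∀ s, f s = P.eval (Real.cos (2 * Real.pi * s)) +
    Real.sin (2 * Real.pi * s) * Q.eval (Real.cos (2 * Real.pi * s))) ∧
  (∀ i, k < i → P.coeff i = 0) ∧ (∀ i, k ≤ i → Q.coeff i = 0) ∧
  P.coeff k ^ 2 + (X * Q).coeff k ^ 2 = (2 * lam) ^ (2 * k)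

open Polynomial in
lemma Dt_TP (lam α E β : ℝ) (k : ℕ) : ∃ P Q, TP lam k (fun s => Dt lam α E k (s + β)) P Q := by
  induction k using Nat.twoStepInduction with
  | zero =>
    refine ⟨1, 0, ?_, ?_, ?_, ?_⟩
    · intro s; simp [Dt_zero]
    · intro i hi; rw [coeff_one]; simp; omega
    · simp
    · simp
  | one =>
    refine ⟨C E - C (2 * lam * Real.cos (2 * Real.pi * β)) * X,
      C (2 * lam * Real.sin (2 * Real.pi * β)), ?_, ?_, ?_, ?_⟩
    · intro s; simp only [Dt_one, mul_add, Real.cos_add]; simp; ring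
    · intro i hi
      rw [coeff_sub, coeff_C_mul, coeff_X, coeff_C]
      simp [show i ≠ 0 by omega, show 1 ≠ i by omega]
    · intro i hi
      rw [coeff_C]
      simp [show i ≠ 0 by omega]
    · have e1 : (X * C (2 * lam * Real.sin (2 * Real.pi * β)) : Polynomial ℝ).coeff 1 =
        2 * lam * Real.sin (2 * Real.pi * β) := by
          rw [coeff_X_mul]; simp
      rw [e1]
      rw [coeff_sub, coeff_C_mul, coeff_X, coeff_C]
      simp
      linear_combination (4 * lam ^ 2) * Real.sin_sq_add_cos_sq (2 * Real.pi * β)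
  | more k ih0 ih1 =>
    obtain ⟨P0, Q0, hf0, hP0, hQ0, -⟩ := ih0
    obtain ⟨P, Q, hf, hP, hQ, htop⟩ := ih1
    set w := 2 * Real.pi * (β + (k + 1) * α) with hw
    refine ⟨C E * P - C (2 * lam * Real.cos w) * (X * P) +
        C (2 * lam * Real.sin w) * (Q - X * (X * Q)) - P0,
      C E * Q - C (2 * lam * Real.cos w) * (X * Q) + C (2 * lam * Real.sin w) * P - Q0, ?_, ?_, ?_, ?_⟩
    · intro s
      simp only [] at hf0 hf
      simp only [Dt_succ]
      rw [hf0, hf, show 2 * Real.pi * (s + β + (k + 1) * α) = 2 * Real.pi * s + w by rw [hw]; ring,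
        Real.cos_add]
      simp
      have := Real.sin_sq_add_cos_sq (2 * Real.pi * s)
      linear_combination 2 * lam * Real.sin w * eval (Real.cos (2 * Real.pi * s)) Q * this
    · intro i hi
      obtain ⟨j, rfl⟩ : ∃ j, i = j + 2 := ⟨i - 2, by omega⟩
      simp only [coeff_sub, coeff_add, coeff_C_mul, coeff_X_mul]
      rw [hP _ (by omega), hP _ (by omega), hQ _ (by omega), hQ _ (by omega), hP0 _ (by omega)]
      simp
    · intro i hi
      obtain ⟨j, rfl⟩ : ∃ j, i = j + 1 := ⟨i - 1, by omega⟩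
      simp only [coeff_sub, coeff_add, coeff_C_mul, coeff_X_mul]
      rw [hP _ (by omega), hQ _ (by omega), hQ _ (by omega), hQ0 _ (by omega)]
      simp
    · rw [coeff_X_mul] at htop ⊢
      simp only [coeff_sub, coeff_add, coeff_C_mul, coeff_X_mul]
      rw [hP (k + 2) (by omega), hQ (k + 2) (by omega), hQ (k + 1) (by omega), hQ0 (k + 1) (by omega),
        hP0 (k + 2) (by omega)]
      have := Real.sin_sq_add_cos_sq w
      rw [show 2 * (k + 2) = 2 * (k + 1) + 2 by ring, pow_add, ← htop]
      linear_combination (4 * lam ^ 2) * (P.coeff (k + 1) ^ 2 + Q.coeff k ^ 2) * this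

open Polynomial in
lemma Dt_poly (lam α E : ℝ) (hl : 1 < lam) (k : ℕ) : ∃ P : Polynomial ℝ, P.natDegree ≤ k ∧
    |P.coeff k| = (2 * lam) ^ k ∧
    ∀ s, Dt lam α E k (s - (k - 1) * α / 2) = P.eval (Real.cos (2 * Real.pi * s)) := by
  obtain ⟨P, Q, hf, hP, hQ, htop⟩ := Dt_TP lam α E (-((k - 1) * α / 2)) k
  have hQ0 : Q = 0 := by
    apply Polynomial.eq_zero_of_infinite_isRoot
    refine Set.Infinite.mono (s := Set.Ioo (-1 : ℝ) 1) ?_ (Set.Ioo_infinite (by norm_num))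
    intro c hc
    have hs : 0 < Real.sin (Real.arccos c) := by
      rw [Real.sin_arccos]; apply Real.sqrt_pos.2; nlinarith [hc.1, hc.2]
    set s := Real.arccos c / (2 * Real.pi) with hsd
    have hs2 : 2 * Real.pi * s = Real.arccos c := by rw [hsd]; field_simp
    have e1 := hf s
    have e2 := hf (-s)
    have e3 := Dt_even lam α E k (s + -((k - 1) * α / 2))
    simp only [] at e1 e2
    rw [show -(s + -(((k : ℝ) - 1) * α / 2)) - (k - 1) * α = -s + -((k - 1) * α / 2) by ring, e1, e2,
      mul_neg, Real.cos_neg, Real.sin_neg, hs2, Real.cos_arccos hc.1.le hc.2.le] at e3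
    have : Real.sin (Real.arccos c) * Q.eval c = 0 := by linarith
    exact (mul_eq_zero.1 this).resolve_left hs.ne'
  subst hQ0
  refine ⟨P, natDegree_le_iff_coeff_eq_zero.2 (fun i hi => hP i hi), ?_, ?_⟩
  · simp at htop
    rw [mul_comm 2 k, pow_mul, ← sq_abs] at htop
    exact (pow_left_inj₀ (abs_nonneg _) (by positivity) (by norm_num)).1 htop
  · intro s
    have := hf s
    simpa [sub_eq_add_neg] using this

open Polynomial in
lemma Dt_sup_lower (lam α E : ℝ) (hl : 1 < lam) (k : ℕ) (B : ℝ)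
    (hB : ∀ t, |Dt lam α E k t| ≤ B) : lam ^ k ≤ B := by
  obtain ⟨P, hd, hc, hP⟩ := Dt_poly lam α E hl k
  have hB0 : 0 ≤ B := (abs_nonneg _).trans (hB 0)
  rcases Nat.eq_zero_or_pos k with rfl | hk
  · have := hB 0; rw [Dt_zero] at this; simpa using this
  have hPB : ∀ x ∈ Set.Icc (-1 : ℝ) 1, |P.eval x| ≤ B := by
    intro x hx
    have := hP (Real.arccos x / (2 * Real.pi))
    rw [show 2 * Real.pi * (Real.arccos x / (2 * Real.pi)) = Real.arccos x by field_simp,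
      Real.cos_arccos hx.1 hx.2] at this
    rw [← this]; exact hB _
  have key : ∀ S : Polynomial ℝ, S.natDegree ≤ k → (∀ x ∈ Set.Icc (-1 : ℝ) 1, |S.eval x| ≤ B) →
      S.coeff k ≤ B * 2 ^ k := by
    intro S hS hSB
    have main : ∀ B' > B, S.coeff k ≤ B' * 2 ^ k := by
      intro B' hB'
      have hB'0 : 0 < B' := by linarith
      have h1 := Polynomial.Chebyshev.coeff_le_of_forall_abs_le_one (n := k) (P := C B'⁻¹ * S)
        (natDegree_le_iff_degree_le.1 ((natDegree_C_mul_le _ _).trans hS)) (by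
          intro x hx
          rw [eval_mul, eval_C, abs_mul, abs_of_pos (inv_pos.2 hB'0), inv_mul_le_iff₀ hB'0]
          linarith [hSB x hx])
      rw [coeff_C_mul, inv_mul_le_iff₀ hB'0] at h1
      refine h1.trans ?_
      gcongr
      · norm_num
      · omega
    apply le_of_forall_gt_imp_ge_of_dense
    intro c hc
    have h2 : B < c / 2 ^ k := by rw [lt_div_iff₀ (by positivity)]; exact hc
    have := main _ h2
    rwa [div_mul_cancel₀ _ (by positivity)] at this
  have h1 : (2 * lam) ^ k ≤ B * 2 ^ k := by
    rw [← hc]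
    apply abs_le.2 ⟨?_, key P hd hPB⟩
    have := key (-P) (by rwa [natDegree_neg]) (by intro x hx; rw [eval_neg, abs_neg]; exact hPB x hx)
    rw [coeff_neg] at this; linarith
  rw [mul_pow, mul_comm] at h1
  exact le_of_mul_le_mul_right h1 (by positivity)

def bk (lam α E : ℝ) (k : ℕ) : ℝ := ⨆ t, |Dt lam α E k t|

lemma bk_bdd {lam α E : ℝ} (hl : 1 < lam) (hE : |E| ≤ 2 + 2 * lam) (k : ℕ) :
    BddAbove (Set.range (fun t => |Dt lam α E k t|)) :=
  ⟨(3 + 4 * lam) ^ k, by rintro _ ⟨t, rfl⟩; exact Dt_bound hl hE k t⟩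

lemma le_bk {lam α E : ℝ} (hl : 1 < lam) (hE : |E| ≤ 2 + 2 * lam) (k : ℕ) (t : ℝ) :
    |Dt lam α E k t| ≤ bk lam α E k := le_ciSup (bk_bdd hl hE k) t

lemma bk_le {lam α E : ℝ} (hl : 1 < lam) (hE : |E| ≤ 2 + 2 * lam) (k : ℕ) :
    bk lam α E k ≤ (3 + 4 * lam) ^ k := ciSup_le (Dt_bound hl hE k)

lemma bk_ge {lam α E : ℝ} (hl : 1 < lam) (hE : |E| ≤ 2 + 2 * lam) (k : ℕ) :
    lam ^ k ≤ bk lam α E k := Dt_sup_lower lam α E hl k _ (le_bk hl hE k)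

lemma bk_pos {lam α E : ℝ} (hl : 1 < lam) (hE : |E| ≤ 2 + 2 * lam) (k : ℕ) :
    0 < bk lam α E k := lt_of_lt_of_le (by positivity) (bk_ge hl hE k)

lemma scale {lam α L0 : ℝ} (hl : 1 < lam) (hL : L0 < Real.log lam) :
    ∃ R : ℕ, 1 ≤ R ∧ ∀ E, |E| ≤ 2 + 2 * lam → ∀ q : ℕ, ∃ k, q ≤ k ∧ k ≤ R * q ∧
      ∀ m ≤ k, bk lam α E m ≤ bk lam α E k * Real.exp (-L0 * ((k : ℝ) - m)) := by
  set Λ := 3 + 4 * lam with hΛ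
  obtain ⟨R, hR⟩ := exists_nat_ge (Real.log Λ / (Real.log lam - L0) + 1)
  have hgap : 0 < Real.log lam - L0 := by linarith
  have hlog : 0 ≤ Real.log Λ := Real.log_nonneg (by linarith)
  have hdiv : 0 ≤ Real.log Λ / (Real.log lam - L0) := by positivity
  have hR1 : 1 ≤ R := by
    have : (1 : ℝ) ≤ R := by linarith
    exact_mod_cast this
  refine ⟨R, hR1, fun E hE q => ?_⟩
  obtain ⟨k, hk, hmax⟩ := Finset.exists_max_image (Finset.range (R * q + 1))
    (fun j : ℕ => bk lam α E j * Real.exp (-L0 * j)) ⟨0, by simp⟩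
  have hk' : k ≤ R * q := by simpa [Nat.lt_succ_iff] using hk
  refine ⟨k, ?_, hk', ?_⟩
  · by_contra! hkq
    have h1 := hmax (R * q) (by simp)
    have h2 : Real.exp ((Real.log lam - L0) * (R * q : ℕ)) ≤
        bk lam α E (R * q) * Real.exp (-L0 * (R * q : ℕ)) := by
      rw [show (Real.log lam - L0) * ((R * q : ℕ) : ℝ) =
        ((R * q : ℕ) : ℝ) * Real.log lam + -L0 * (R * q : ℕ) by ring, Real.exp_add, Real.exp_nat_mul,
        Real.exp_log (by linarith)]
      gcongr
      exact bk_ge hl hE _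
    have h3 : bk lam α E k * Real.exp (-L0 * k) ≤ Real.exp ((Real.log Λ - L0) * k) := by
      rw [show (Real.log Λ - L0) * (k : ℝ) = (k : ℝ) * Real.log Λ + -L0 * k by ring, Real.exp_add,
        Real.exp_nat_mul, Real.exp_log (by linarith)]
      gcongr
      exact bk_le hl hE _
    have h4 := Real.exp_le_exp.1 ((h2.trans h1).trans h3)
    have h5 : Real.log Λ + (Real.log lam - L0) ≤ (Real.log lam - L0) * R := by
      have : (Real.log Λ / (Real.log lam - L0) + 1) * (Real.log lam - L0) ≤
        R * (Real.log lam - L0) := by gcongr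
      rw [add_mul, div_mul_cancel₀ _ hgap.ne'] at this
      linarith
    have hkq' : (k : ℝ) + 1 ≤ q := by exact_mod_cast hkq
    have hk0 : (0 : ℝ) ≤ k := Nat.cast_nonneg _
    have hloglam : Real.log lam ≤ Real.log Λ := Real.log_le_log (by linarith) (by linarith)
    push_cast at h4
    have h6 : (Real.log Λ + (Real.log lam - L0)) * q ≤ (Real.log Λ - L0) * k := by
      calc _ ≤ (Real.log lam - L0) * R * q := by gcongr
        _ ≤ _ := by linarith
    have h7 : 0 < Real.log lam := Real.log_pos hl
    have h8 : (Real.log Λ - L0) * k ≤ (Real.log Λ - L0) * q := by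
      have : 0 ≤ Real.log Λ - L0 := by linarith
      gcongr
    have h9 : 0 < Real.log lam * q := mul_pos h7 (by linarith)
    nlinarith
  · intro m hm
    have h1 := hmax m (by simp; omega)
    rw [show -L0 * ((k : ℝ) - m) = -L0 * k + L0 * m by ring, Real.exp_add, ← mul_assoc]
    calc bk lam α E m = bk lam α E m * Real.exp (-L0 * m) * Real.exp (L0 * m) := by
          rw [mul_assoc, ← Real.exp_add]; simp
      _ ≤ _ := by gcongr

open Polynomial in
lemma interp_bound (P : Polynomial ℝ) (J : Finset ℤ) (v : ℤ → ℝ) (hv : Set.InjOn v J)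
    (hdeg : P.natDegree + 1 ≤ J.card) (t : ℝ) :
    |P.eval t| ≤ ∑ x ∈ J, |P.eval (v x)| * ∏ j ∈ J.erase x, (|t - v j| / |v x - v j|) := by
  have h1 := Lagrange.eq_interpolate (f := P) hv (by
    refine lt_of_le_of_lt degree_le_natDegree ?_
    exact_mod_cast hdeg)
  conv_lhs => rw [h1]
  rw [Lagrange.interpolate_apply, eval_finsetSum]
  refine (Finset.abs_sum_le_sum_abs _ _).trans (Finset.sum_le_sum fun x hx => ?_)
  rw [eval_mul, eval_C, abs_mul]
  apply le_of_eq
  congr 1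
  rw [Lagrange.basis, eval_prod, Finset.abs_prod]
  refine Finset.prod_congr rfl fun j hj => ?_
  rw [Lagrange.basisDivisor]
  simp [abs_mul, abs_inv]
  ring

lemma prod_two_blocks {B₁ B₂ : Finset ℤ} (h : Disjoint B₁ B₂) (f : ℤ → ℝ) (x : ℤ) :
    ∏ j ∈ (B₁ ∪ B₂).erase x, f j = (∏ j ∈ B₁.erase x, f j) * ∏ j ∈ B₂.erase x, f j := by
  rw [Finset.erase_union_distrib, Finset.prod_union]
  exact h.mono (Finset.erase_subset _ _) (Finset.erase_subset _ _)

lemma interp_main {lam α : ℝ} (hl : 1 < lam) (hα : IsDiophantine α) {ε : ℝ} (hε : 0 < ε) :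
    ∃ C : ℝ, ∀ (E θ : ℝ) (k : ℕ) (a₁ a₂ : ℤ) (N₁ N₂ : ℕ) (η₁ η₂ : ℤ → ℝ) (η₀ : ℝ),
      |E| ≤ 2 + 2 * lam → N₁ + N₂ = k + 1 →
      Disjoint (Finset.Ico a₁ (a₁ + N₁)) (Finset.Ico a₂ (a₂ + N₂)) →
      0 < η₀ → η₀ ≤ 1 →
      (∀ x ∈ Finset.Ico a₁ (a₁ + N₁) ∪ Finset.Ico a₂ (a₂ + N₂),
        ∀ i ∈ Finset.Ico a₁ (a₁ + N₁) ∪ Finset.Ico a₂ (a₂ + N₂), i ≠ x →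
        η₀ ≤ sn ((i - x : ℤ) * α)) →
      (∀ x, 0 < η₁ x ∧ η₁ x ≤ 1 ∧ 0 < η₂ x ∧ η₂ x ≤ 1) →
      (∀ x ∈ Finset.Ico a₁ (a₁ + N₁) ∪ Finset.Ico a₂ (a₂ + N₂),
        ∀ i ∈ Finset.Ico a₁ (a₁ + N₁), i ≠ x → η₁ x ≤ sn (2 * θ + (x + i + k - 1 : ℤ) * α)) →
      (∀ x ∈ Finset.Ico a₁ (a₁ + N₁) ∪ Finset.Ico a₂ (a₂ + N₂),
        ∀ i ∈ Finset.Ico a₂ (a₂ + N₂), i ≠ x → η₂ x ≤ sn (2 * θ + (x + i + k - 1 : ℤ) * α)) →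
      ∃ x ∈ Finset.Ico a₁ (a₁ + N₁) ∪ Finset.Ico a₂ (a₂ + N₂),
        bk lam α E k * (η₁ x * η₂ x * η₀ ^ 2 * Real.exp (-(ε * k + C))) ≤
          |Dt lam α E k (θ + x * α)| := by
  set e := ε / 5 with he
  have he0 : 0 < e := by positivity
  obtain ⟨C1, hC1⟩ := prod_upper hα he0
  obtain ⟨C2, hC20, hC2⟩ := prod_lower hα he0
  set C1' := |C1| with hC1'
  refine ⟨4 * C1' + 4 * C2 + 5 * e + Real.log (2 / e), ?_⟩
  intro E θ k a₁ a₂ N₁ N₂ η₁ η₂ η₀ hE hN hdis hη0 hη01 hdiff hη hs1 hs2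
  set B₁ := Finset.Ico a₁ (a₁ + (N₁ : ℤ)) with hB1
  set B₂ := Finset.Ico a₂ (a₂ + (N₂ : ℤ)) with hB2
  set J := B₁ ∪ B₂ with hJ
  have hcard : J.card = k + 1 := by
    rw [hJ, Finset.card_union_of_disjoint hdis, hB1, hB2]; simp; omega
  by_contra! hcon
  obtain ⟨P, hPd, -, hP⟩ := Dt_poly lam α E hl k
  set w : ℝ := ((k : ℝ) - 1) * α / 2 with hw
  set s : ℤ → ℝ := fun j => θ + j * α + w with hs
  set v : ℤ → ℝ := fun j => Real.cos (2 * Real.pi * s j) with hv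
  have hNk : (N₁ : ℝ) + N₂ = k + 1 := by exact_mod_cast hN
  have hup : ∀ (t : ℝ) (x : ℤ), ∏ j ∈ J.erase x, sn (t + j * α) ≤ Real.exp (e * (k + 1) + 2 * C1') := by
    intro t x
    rw [hJ, prod_two_blocks hdis]
    calc _ ≤ Real.exp (e * N₁ + C1) * Real.exp (e * N₂ + C1) := by
          apply mul_le_mul (hC1 t a₁ N₁ x) (hC1 t a₂ N₂ x) (Finset.prod_nonneg fun i _ => sn_nonneg _)
            (Real.exp_pos _).le
      _ ≤ _ := by
          rw [← Real.exp_add]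
          apply Real.exp_le_exp.2
          have := le_abs_self C1
          rw [← hNk]; linarith
  have hlow : ∀ (t : ℝ) (x : ℤ) (h1 h2 : ℝ), 0 < h1 → h1 ≤ 1 → 0 < h2 → h2 ≤ 1 →
      (∀ i ∈ B₁, i ≠ x → h1 ≤ sn (t + i * α)) → (∀ i ∈ B₂, i ≠ x → h2 ≤ sn (t + i * α)) →
      h1 * h2 * Real.exp (-(e * (k + 1) + 2 * C2)) ≤ ∏ j ∈ J.erase x, sn (t + j * α) := by
    intro t x h1 h2 h10 h11 h20 h21 hb1 hb2
    rw [hJ, prod_two_blocks hdis]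
    calc _ = (h1 * Real.exp (-(e * N₁ + C2))) * (h2 * Real.exp (-(e * N₂ + C2))) := by
          rw [mul_mul_mul_comm, ← Real.exp_add]
          congr 2; rw [← hNk]; ring
      _ ≤ _ := by
          apply mul_le_mul
          · exact hC2 t a₁ N₁ x h1 h10 h11 (fun i hi => hb1 i (Finset.mem_of_mem_erase hi) (Finset.ne_of_mem_erase hi))
          · exact hC2 t a₂ N₂ x h2 h20 h21 (fun i hi => hb2 i (Finset.mem_of_mem_erase hi) (Finset.ne_of_mem_erase hi))
          · positivity
          · exact Finset.prod_nonneg fun i _ => sn_nonneg _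
  have hsum : ∀ x j : ℤ, sn (s x + s j) = sn (2 * θ + (x + j + k - 1 : ℤ) * α) := by
    intro x j; congr 1; simp only [hs, hw]; push_cast; ring
  have hdif : ∀ x j : ℤ, sn (s x - s j) = sn ((j - x : ℤ) * α) := by
    intro x j; rw [← sn_neg]; congr 1; simp only [hs]; push_cast; ring
  have hpos : ∀ x ∈ J, ∀ j ∈ J, j ≠ x → 0 < sn (s x + s j) ∧ 0 < sn (s x - s j) := by
    intro x hx j hj hjx
    refine ⟨?_, ?_⟩
    · rw [hsum]
      rcases Finset.mem_union.1 hj with h | h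
      · exact lt_of_lt_of_le (hη x).1 (hs1 x hx j h hjx)
      · exact lt_of_lt_of_le (hη x).2.2.1 (hs2 x hx j h hjx)
    · rw [hdif]; exact lt_of_lt_of_le hη0 (hdiff x hx j hj hjx)
  have hinj : Set.InjOn v J := by
    intro x hx j hj hxj
    by_contra hne
    have h1 := cos_sub_cos_sn (s x) (s j)
    have h2 := hpos x hx j hj (Ne.symm hne)
    rw [show Real.cos (2 * Real.pi * s x) = Real.cos (2 * Real.pi * s j) from hxj, sub_self,
      abs_zero] at h1
    nlinarith [mul_pos h2.1 h2.2]
  have hb0 := bk_pos (α := α) hl hE k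
  set b := bk lam α E k with hb
  set C := 4 * C1' + 4 * C2 + 5 * e + Real.log (2 / e) with hC
  have hterm : ∀ t : ℝ, ∀ x ∈ J, |P.eval (v x)| * ∏ j ∈ J.erase x,
      (|Real.cos (2 * Real.pi * t) - v j| / |v x - v j|) ≤
      b * Real.exp (-(ε * k + C)) * Real.exp (4 * (e * (k + 1)) + 4 * C1' + 4 * C2) := by
    intro t x hx
    have e1 : ∏ j ∈ J.erase x, (|Real.cos (2 * Real.pi * t) - v j| / |v x - v j|) =
        ((∏ j ∈ J.erase x, sn ((t + θ + w) + j * α)) * ∏ j ∈ J.erase x, sn ((θ + w - t) + j * α)) /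
        ((∏ j ∈ J.erase x, sn ((s x + θ + w) + j * α)) *
          ∏ j ∈ J.erase x, sn ((θ + w - s x) + j * α)) := by
      rw [← Finset.prod_mul_distrib, ← Finset.prod_mul_distrib, ← Finset.prod_div_distrib]
      refine Finset.prod_congr rfl fun j hj => ?_
      simp only [hv]
      rw [cos_sub_cos_sn, cos_sub_cos_sn, mul_div_mul_left _ _ (by norm_num : (1 / 2 : ℝ) ≠ 0)]
      rw [← sn_neg (t - s j), ← sn_neg (s x - s j)]
      simp only [hs]
      congr 3 <;> ring
    have hηx := hη x
    have l1 := hlow (s x + θ + w) x (η₁ x) (η₂ x) hηx.1 hηx.2.1 hηx.2.2.1 hηx.2.2.2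
      (fun i hi hix => by
        have := hs1 x hx i hi hix
        rw [← hsum] at this
        convert this using 2
        simp only [hs]; ring)
      (fun i hi hix => by
        have := hs2 x hx i hi hix
        rw [← hsum] at this
        convert this using 2
        simp only [hs]; ring)
    have hd : ∀ i ∈ J, i ≠ x → η₀ ≤ sn (θ + w - s x + i * α) := by
      intro i hi hix
      have := hdiff x hx i hi hix
      convert this using 2
      simp only [hs]; push_cast; ring
    have l2 := hlow (θ + w - s x) x η₀ η₀ hη0 hη01 hη0 hη01
      (fun i hi => hd i (Finset.mem_union_left _ hi)) (fun i hi => hd i (Finset.mem_union_right _ hi))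
    have u1 := hup (t + θ + w) x
    have u2 := hup (θ + w - t) x
    have hval : P.eval (v x) = Dt lam α E k (θ + x * α) := by
      rw [← hP]; simp only [hs]; congr 1; ring
    have hc := hcon x hx
    rw [hval, e1, mul_div_assoc']
    have hX : 0 < Real.exp (-(e * (k + 1) + 2 * C2)) := Real.exp_pos _
    have hη12 : 0 < η₁ x * η₂ x := mul_pos hηx.1 hηx.2.2.1
    have hA := lt_of_lt_of_le (mul_pos hη12 hX) l1
    have hB := lt_of_lt_of_le (mul_pos (mul_pos hη0 hη0) hX) l2
    rw [div_le_iff₀ (mul_pos hA hB)]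
    calc _ ≤ (b * (η₁ x * η₂ x * η₀ ^ 2 * Real.exp (-(ε * k + C)))) *
          (Real.exp (e * (k + 1) + 2 * C1') * Real.exp (e * (k + 1) + 2 * C1')) := by
          apply mul_le_mul hc.le
          · apply mul_le_mul u1 u2 (Finset.prod_nonneg fun i _ => sn_nonneg _) (Real.exp_pos _).le
          · exact mul_nonneg (Finset.prod_nonneg fun i _ => sn_nonneg _) (Finset.prod_nonneg fun i _ => sn_nonneg _)
          · positivity
      _ = b * Real.exp (-(ε * k + C)) * Real.exp (4 * (e * (k + 1)) + 4 * C1' + 4 * C2) *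
          ((η₁ x * η₂ x * Real.exp (-(e * (k + 1) + 2 * C2))) *
          (η₀ * η₀ * Real.exp (-(e * (k + 1) + 2 * C2)))) := by
          have hU : Real.exp (4 * (e * ((k : ℝ) + 1)) + 4 * C1' + 4 * C2) =
            Real.exp (e * (k + 1) + 2 * C1') * Real.exp (e * (k + 1) + 2 * C1') *
            (Real.exp (e * (k + 1) + 2 * C2) * Real.exp (e * (k + 1) + 2 * C2)) := by
            rw [← Real.exp_add, ← Real.exp_add, ← Real.exp_add]; congr 1; ring
          have : Real.exp (e * (k + 1) + 2 * C2) ≠ 0 := (Real.exp_pos _).ne'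
          rw [hU, Real.exp_neg (e * (k + 1) + 2 * C2)]
          generalize Real.exp (e * (k + 1) + 2 * C2) = V at *
          generalize Real.exp (e * (k + 1) + 2 * C1') = U at *
          field_simp
      _ ≤ _ := by
          apply mul_le_mul_of_nonneg_left _ (by positivity)
          apply mul_le_mul l1 l2 (by positivity) hA.le
  have hfin : ∀ t : ℝ, |Dt lam α E k t| ≤ b / 2 := by
    intro t
    have h1 := interp_bound P J v hinj (by omega) (Real.cos (2 * Real.pi * (t + w)))
    rw [← hP (t + w), show t + w - w = t by ring] at h1
    refine h1.trans ((Finset.sum_le_sum (hterm (t + w))).trans ?_)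
    rw [Finset.sum_const, hcard, nsmul_eq_mul, mul_assoc b, ← Real.exp_add]
    have h2 : -(ε * k + C) + (4 * (e * (k + 1)) + 4 * C1' + 4 * C2) = -(e * (k + 1)) + -Real.log (2 / e) := by
      rw [hC, show ε = 5 * e by rw [he]; ring]; ring
    rw [h2, Real.exp_add, Real.exp_neg (Real.log _), Real.exp_log (by positivity)]
    have h3 := Real.add_one_le_exp (e * ((k : ℝ) + 1))
    rw [Real.exp_neg]
    have h4 : 0 < Real.exp (e * ((k : ℝ) + 1)) := Real.exp_pos _
    push_cast
    rw [show ((k : ℝ) + 1) * (b * ((Real.exp (e * (k + 1)))⁻¹ * (2 / e)⁻¹)) =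
      (b / 2) * ((e * (k + 1)) / Real.exp (e * (k + 1))) by field_simp]
    apply mul_le_of_le_one_right (by positivity)
    rw [div_le_one h4]; linarith
  have : b ≤ b / 2 := ciSup_le hfin
  linarith

lemma green {lam α θ E L0 : ℝ} (hl : 1 < lam) (hE : |E| ≤ 2 + 2 * lam) (hL0 : 0 < L0)
    {φ : ℤ → ℝ} (h : IsEigenfunction (amoPot lam α θ) E φ) (h1 : ∀ n, |φ n| ≤ 1) {k : ℕ}
    (hk : ∀ m ≤ k, bk lam α E m ≤ bk lam α E k * Real.exp (-L0 * ((k : ℝ) - m)))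
    {x z : ℤ} {μ g : ℝ} (hxz : x ≤ z) (hzx : z + 1 ≤ x + k) (hμ1 : μ ≤ (z : ℝ) - x + 1)
    (hμ2 : μ ≤ (x : ℝ) + k - z)
    (hG : bk lam α E k * Real.exp (-g) ≤ |Dt lam α E k (θ + x * α)|) :
    |φ z| ≤ 2 * Real.exp (-L0 * μ + g) := by
  obtain ⟨p, hp⟩ : ∃ p : ℕ, (p : ℤ) = z - x := ⟨(z - x).toNat, by omega⟩
  obtain ⟨q, hq⟩ : ∃ q : ℕ, k = p + 1 + q := ⟨k - (p + 1), by omega⟩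
  have hz : z = x + p := by omega
  have hpR : (p : ℝ) = z - x := by exact_mod_cast hp
  have hqR : (k : ℝ) = p + 1 + q := by exact_mod_cast hq
  have hc := Dt_cramer h x p q
  rw [← hq, ← hz] at hc
  have hb := bk_pos (α := α) hl hE k
  set b := bk lam α E k
  have e1 : |Dt lam α E q (θ + (z + 1 : ℤ) * α) * φ (x - 1)| ≤ b * Real.exp (-L0 * μ) := by
    rw [abs_mul]
    calc _ ≤ bk lam α E q * 1 := by
          apply mul_le_mul (le_bk hl hE _ _) (h1 _) (abs_nonneg _) (bk_pos hl hE _).le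
      _ ≤ b * Real.exp (-L0 * ((k : ℝ) - q)) := by rw [mul_one]; exact hk q (by omega)
      _ ≤ _ := by
          have : μ ≤ (k : ℝ) - q := by linarith
          gcongr ?_ * Real.exp ?_
          nlinarith
  have e2 : |Dt lam α E p (θ + x * α) * φ (z + 1 + q)| ≤ b * Real.exp (-L0 * μ) := by
    rw [abs_mul]
    calc _ ≤ bk lam α E p * 1 := by
          apply mul_le_mul (le_bk hl hE _ _) (h1 _) (abs_nonneg _) (bk_pos hl hE _).le
      _ ≤ b * Real.exp (-L0 * ((k : ℝ) - p)) := by rw [mul_one]; exact hk p (by omega)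
      _ ≤ _ := by
          have : μ ≤ (k : ℝ) - p := by linarith
          gcongr ?_ * Real.exp ?_
          nlinarith
  have e3 : b * Real.exp (-g) * |φ z| ≤ b * (2 * Real.exp (-L0 * μ)) := by
    calc _ ≤ |Dt lam α E k (θ + x * α)| * |φ z| := by gcongr
      _ = |Dt lam α E k (θ + x * α) * φ z| := (abs_mul _ _).symm
      _ ≤ _ := by rw [hc]; refine (abs_add_le _ _).trans ?_; linarith
  rw [mul_assoc] at e3
  have e4 := le_of_mul_le_mul_left e3 hb
  rw [Real.exp_add, Real.exp_neg, ← div_eq_inv_mul, div_le_iff₀ (Real.exp_pos _)] at *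
  linarith

lemma dioph_exp {α : ℝ} (hα : IsDiophantine α) (K : ℝ) {ε : ℝ} (hε : 0 < ε) :
    ∃ Y : ℕ, ∀ y : ℕ, Y ≤ y → ∀ k : ℤ, k ≠ 0 → |(k : ℝ)| ≤ K * y →
      2 * Real.exp (-ε * y) ≤ distToInt (k * α) := by
  obtain ⟨κ, τ, hκ, hτ, h⟩ := hα
  have ht := (tendsto_rpow_mul_exp_neg_mul_atTop_nhds_zero κ ε hε).const_mul (2 * |K| ^ κ)
  rw [mul_zero] at ht
  have ht2 := (ht.comp tendsto_natCast_atTop_atTop).eventually (gt_mem_nhds hτ)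
  obtain ⟨Y, hY⟩ := Filter.eventually_atTop.1 ht2
  refine ⟨Y, fun y hy k hk hkK => ?_⟩
  have h1 := hY y hy
  simp only [Function.comp] at h1
  refine le_trans ?_ (h k hk)
  have hk0 : 0 < |(k : ℝ)| := by positivity
  rw [le_div_iff₀ (by positivity)]
  have h2 : |(k : ℝ)| ^ κ ≤ |K| ^ κ * (y : ℝ) ^ κ := by
    rw [← Real.mul_rpow (abs_nonneg _) (Nat.cast_nonneg _)]
    apply Real.rpow_le_rpow (abs_nonneg _) _ hκ.le
    refine hkK.trans ?_
    gcongr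
    exact le_abs_self _
  calc _ ≤ 2 * Real.exp (-ε * y) * (|K| ^ κ * (y : ℝ) ^ κ) := by gcongr
    _ = 2 * |K| ^ κ * ((y : ℝ) ^ κ * Real.exp (-ε * y)) := by ring
    _ ≤ τ := h1.le

lemma uniq_res {α : ℝ} (hα : IsDiophantine α) (K : ℝ) {ε : ℝ} (hε : 0 < ε) :
    ∃ Y : ℕ, ∀ y : ℕ, Y ≤ y → ∀ θ : ℝ, ∃ n : ℤ, ∀ n' : ℤ, n' ≠ n → |(n' : ℝ)| ≤ K * y →
      Real.exp (-ε * y) ≤ distToInt (2 * θ + n' * α) := by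
  obtain ⟨Y, hY⟩ := dioph_exp hα (2 * K) hε
  refine ⟨Y, fun y hy θ => ?_⟩
  by_cases hex : ∃ n : ℤ, |(n : ℝ)| ≤ K * y ∧ distToInt (2 * θ + n * α) < Real.exp (-ε * y)
  · obtain ⟨n, hn, hd⟩ := hex
    refine ⟨n, fun n' hne hn' => ?_⟩
    by_contra! hcon
    have h1 := hY y hy (n' - n) (sub_ne_zero.2 hne) (by
      push_cast; refine (abs_sub _ _).trans ?_; linarith)
    have h2 := dti_sub (2 * θ + n' * α) (2 * θ + n * α)
    rw [show 2 * θ + n' * α - (2 * θ + n * α) = ((n' - n : ℤ) : ℝ) * α by push_cast; ring] at h2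
    linarith
  · push Not at hex
    exact ⟨0, fun n' _ hn' => hex n' hn'⟩

lemma dist_le_sn {u r : ℝ} (h : r ≤ distToInt u) : r ≤ sn u := by
  have := sn_ge u
  have := dti_nonneg u
  linarith

def InterpProp (lam α ε C : ℝ) : Prop :=
  ∀ (E θ : ℝ) (k : ℕ) (a₁ a₂ : ℤ) (N₁ N₂ : ℕ) (η₁ η₂ : ℤ → ℝ) (η₀ : ℝ),
      |E| ≤ 2 + 2 * lam → N₁ + N₂ = k + 1 →
      Disjoint (Finset.Ico a₁ (a₁ + N₁)) (Finset.Ico a₂ (a₂ + N₂)) →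
      0 < η₀ → η₀ ≤ 1 →
      (∀ x ∈ Finset.Ico a₁ (a₁ + N₁) ∪ Finset.Ico a₂ (a₂ + N₂),
        ∀ i ∈ Finset.Ico a₁ (a₁ + N₁) ∪ Finset.Ico a₂ (a₂ + N₂), i ≠ x →
        η₀ ≤ sn ((i - x : ℤ) * α)) →
      (∀ x, 0 < η₁ x ∧ η₁ x ≤ 1 ∧ 0 < η₂ x ∧ η₂ x ≤ 1) →
      (∀ x ∈ Finset.Ico a₁ (a₁ + N₁) ∪ Finset.Ico a₂ (a₂ + N₂),
        ∀ i ∈ Finset.Ico a₁ (a₁ + N₁), i ≠ x → η₁ x ≤ sn (2 * θ + (x + i + k - 1 : ℤ) * α)) →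
      (∀ x ∈ Finset.Ico a₁ (a₁ + N₁) ∪ Finset.Ico a₂ (a₂ + N₂),
        ∀ i ∈ Finset.Ico a₂ (a₂ + N₂), i ≠ x → η₂ x ≤ sn (2 * θ + (x + i + k - 1 : ℤ) * α)) →
      ∃ x ∈ Finset.Ico a₁ (a₁ + N₁) ∪ Finset.Ico a₂ (a₂ + N₂),
        bk lam α E k * (η₁ x * η₂ x * η₀ ^ 2 * Real.exp (-(ε * k + C))) ≤
          |Dt lam α E k (θ + x * α)|

lemma caseA {lam α θ E L0 c ε e0 C δ : ℝ} (hl : 1 < lam) (hE : |E| ≤ 2 + 2 * lam) (hL0 : 0 < L0)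
    (hc0 : 0 < c) (hc1 : c ≤ 1 / 8) (hε : 0 < ε) (hδ0 : 0 < δ)
    (hI : InterpProp lam α e0 C)
    {φ : ℤ → ℝ} (h : IsEigenfunction (amoPot lam α θ) E φ) (h1 : ∀ n, |φ n| ≤ 1) {k : ℕ}
    (hk : ∀ m ≤ k, bk lam α E m ≤ bk lam α E k * Real.exp (-L0 * ((k : ℝ) - m)))
    {y R : ℕ} {n : ℤ} (hy : 4 ≤ y) (hk1 : 3 * y ≤ k) (hk2 : k ≤ 3 * R * y) (hR : 1 ≤ R)
    (he0 : e0 * k ≤ ε * y)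
    (hdio : ∀ k : ℤ, k ≠ 0 → |(k : ℝ)| ≤ (11 * R) * y → 2 * Real.exp (-ε * y) ≤ distToInt (k * α))
    (hres : ∀ n' : ℤ, n' ≠ n → |(n' : ℝ)| ≤ (11 * R) * y →
      Real.exp (-ε * y) ≤ distToInt (2 * θ + n' * α))
    (hn : Real.exp (-δ * |(n : ℝ)|) ≤ distToInt (2 * θ + n * α))
    (hny : |(n : ℝ) - y| ≤ c * y) :
    |φ y| ≤ 2 * Real.exp (-L0 * (c * y) + (4 * ε * y + C)) ∨
    min |φ 0| |φ y| ≤ 2 * Real.exp (-L0 * ((1 - 2 * c) * y - 2) + (δ * (1 + c) * y + 4 * ε * y + C)) := by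
  set a : ℤ := ⌊(1 - c) * (y : ℝ)⌋ with ha
  have ha1 : (a : ℝ) ≤ (1 - c) * y := Int.floor_le _
  have ha2 : (1 - c) * y < a + 1 := Int.lt_floor_add_one _
  have hyR : (4 : ℝ) ≤ y := by exact_mod_cast hy
  have hkR : 3 * (y : ℝ) ≤ k := by exact_mod_cast hk1
  have hkR2 : (k : ℝ) ≤ 3 * R * y := by exact_mod_cast hk2
  have hRR : (1 : ℝ) ≤ R := by exact_mod_cast hR
  have hcy : c * y ≤ (1 / 8) * y := by gcongr
  have hcy0 : 0 < c * y := by positivity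
  have hRy : (y : ℝ) ≤ R * y := by nlinarith
  have hRy2 : (11 * (R : ℝ)) * y = 11 * (R * y) := by ring
  have ha0 : 1 ≤ a := by
    have : (1 : ℝ) < a + 1 := by nlinarith
    have : (1 : ℤ) < a + 1 := by exact_mod_cast this
    omega
  have hay : a ≤ y := by
    have : (a : ℝ) ≤ y := by nlinarith
    exact_mod_cast this
  have hny' := abs_le.1 hny
  have hn0 : 0 < (n : ℝ) := by linarith
  set B := Real.exp (-(δ * (1 + c) + ε) * y) with hB
  set Ee := Real.exp (-ε * y) with hEe
  have hBE : B ≤ Ee := by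
    apply Real.exp_le_exp.2
    have : 0 < δ * (1 + c) * y := by positivity
    linarith
  have hE1 : Ee ≤ 1 := Real.exp_le_one_iff.2 (by have : 0 < ε * y := by positivity
                                                 linarith)
  have hBn : B ≤ Real.exp (-δ * |(n : ℝ)|) := by
    apply Real.exp_le_exp.2
    rw [abs_of_pos hn0]
    have : δ * n ≤ δ * ((1 + c) * y) := by gcongr; linarith
    have : 0 < ε * y := by positivity
    linarith
  have hsum : ∀ x i : ℤ, a - k ≤ x → x ≤ a → a - k ≤ i → i ≤ a →
      |((x + i + k - 1 : ℤ) : ℝ)| ≤ (11 * R) * y := by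
    intro x i hx1 hx2 hi1 hi2
    have : |x + i + k - 1| ≤ 3 * (k : ℤ) + 2 * y := by rw [abs_le]; omega
    have h2 : |((x + i + k - 1 : ℤ) : ℝ)| ≤ 3 * k + 2 * y := by exact_mod_cast this
    rw [hRy2]; linarith
  obtain ⟨x, hx, hDx⟩ := hI E θ k (a - k) 0 (k + 1) 0
    (fun x => if x ≤ n + 1 - a then B else Ee) (fun _ => 1) Ee hE (by ring) (by simp)
    (Real.exp_pos _) hE1
    (by
      intro x hx i hi hne
      simp at hx hi
      apply dist_le_sn
      refine le_trans ?_ (hdio (i - x) (sub_ne_zero.2 hne) ?_)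
      · linarith [Real.exp_pos (-ε * y)]
      · have : |i - x| ≤ (k : ℤ) := by rw [abs_le]; omega
        have : |((i - x : ℤ) : ℝ)| ≤ k := by exact_mod_cast this
        rw [hRy2]; linarith)
    (by
      intro x
      refine ⟨?_, ?_, by norm_num, le_rfl⟩
      · split_ifs <;> exact Real.exp_pos _
      · split_ifs
        · exact hBE.trans hE1
        · exact hE1)
    (by
      intro x hx i hi hne
      simp at hx hi
      apply dist_le_sn
      have hs := hsum x i (by omega) (by omega) (by omega) (by omega)
      split_ifs with hxn
      · by_cases hn' : x + i + k - 1 = n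
        · rw [hn']; exact hBn.trans hn
        · exact hBE.trans (hres _ hn' hs)
      · exact hres _ (by omega) hs)
    (by simp)
  simp at hx
  have hxa : x ≤ a := by omega
  have hxa2 : a - k ≤ x := by omega
  have hxaR : (x : ℝ) ≤ a := by exact_mod_cast hxa
  have hxa2R : (a : ℝ) - k ≤ x := by exact_mod_cast hxa2
  have hEe2 : Ee ^ 2 = Real.exp (-(2 * ε * y)) := by
    rw [hEe, ← Real.exp_nat_mul]; congr 1; push_cast; ring
  split_ifs at hDx with hxn
  · right
    have hG : bk lam α E k * Real.exp (-(δ * (1 + c) * y + 4 * ε * y + C)) ≤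
        |Dt lam α E k (θ + x * α)| := by
      refine le_trans ?_ hDx
      apply mul_le_mul_of_nonneg_left _ (bk_pos hl hE k).le
      rw [hEe2, hB, mul_one, ← Real.exp_add, ← Real.exp_add]
      apply Real.exp_le_exp.2
      linarith
    have hxnR : (x : ℝ) ≤ n + 1 - a := by exact_mod_cast hxn
    by_cases hxy : x ≤ -y
    · have hxyR : (x : ℝ) ≤ -y := by exact_mod_cast hxy
      refine (min_le_left _ _).trans ?_
      refine green hl hE hL0 h h1 hk (x := x) (by omega) (by omega) ?_ ?_ hG
      · push_cast; linarith
      · push_cast; linarith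
    · have hxyR : -(y : ℝ) < x := by exact_mod_cast (not_le.1 hxy)
      refine (min_le_right _ _).trans ?_
      refine green hl hE hL0 h h1 hk (x := x) (by omega) (by omega) ?_ ?_ hG
      · push_cast; linarith
      · push_cast; linarith
  · left
    have hG : bk lam α E k * Real.exp (-(4 * ε * y + C)) ≤
        |Dt lam α E k (θ + x * α)| := by
      refine le_trans ?_ hDx
      apply mul_le_mul_of_nonneg_left _ (bk_pos hl hE k).le
      rw [hEe2, mul_one, hEe, ← Real.exp_add, ← Real.exp_add]
      apply Real.exp_le_exp.2
      linarith
    have hxnR : (n : ℝ) + 1 - a < x := by exact_mod_cast (not_le.1 hxn)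
    have hx0 : 0 < x := by
      have : (0 : ℝ) < x := by linarith
      exact_mod_cast this
    refine green hl hE hL0 h h1 hk (x := x) (by omega) (by omega) ?_ ?_ hG
    · push_cast; linarith
    · push_cast; linarith

lemma caseB_core {lam α θ E L0 ε e0 C : ℝ} (hl : 1 < lam) (hE : |E| ≤ 2 + 2 * lam) (hL0 : 0 < L0)
    (hε : 0 < ε) (hI : InterpProp lam α e0 C)
    {φ : ℤ → ℝ} (h : IsEigenfunction (amoPot lam α θ) E φ) (h1 : ∀ n, |φ n| ≤ 1) {k : ℕ}
    (hk : ∀ m ≤ k, bk lam α E m ≤ bk lam α E k * Real.exp (-L0 * ((k : ℝ) - m)))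
    {y R w : ℕ} {n z z' b : ℤ} (hw : 1 ≤ w) (hwk : 8 * w ≤ k) (hky : k < y) (hR : 1 ≤ R)
    (he0 : e0 * k ≤ ε * y)
    (hdio : ∀ k : ℤ, k ≠ 0 → |(k : ℝ)| ≤ (11 * R) * y → 2 * Real.exp (-ε * y) ≤ distToInt (k * α))
    (hres : ∀ n' : ℤ, n' ≠ n → |(n' : ℝ)| ≤ (11 * R) * y →
      Real.exp (-ε * y) ≤ distToInt (2 * θ + n' * α))
    (hzz : (z = 0 ∧ z' = y) ∨ (z = y ∧ z' = 0))
    (hb : (b = z - 3 * w ∧ n ≤ 2 * z) ∨ (b = z - k + 1 + w ∧ 2 * z < n))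
    (hbig : (z' = y ∧ n ≤ y) ∨ (z' = 0 ∧ y < n))
    (hny : (k : ℤ) < |n - y|) :
    min |φ 0| |φ y| ≤ 2 * Real.exp (-L0 * w + (5 * ε * y + C)) := by
  set Ee := Real.exp (-ε * y) with hEe
  have hE1 : Ee ≤ 1 := Real.exp_le_one_iff.2 (by have : 0 ≤ ε * y := by positivity
                                                 linarith)
  have hRR : (1 : ℝ) ≤ R := by exact_mod_cast hR
  have hRy : (y : ℝ) ≤ R * y := by nlinarith [Nat.cast_nonneg (α := ℝ) y]
  have hRy2 : (11 * (R : ℝ)) * y = 11 * (R * y) := by ring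
  have hny' : n - y < -k ∨ (k : ℤ) < n - y := by
    rcases lt_abs.1 hny with h | h
    · right; exact h
    · left; omega
  have hloc : ∀ x ∈ Finset.Ico (z' - k + w + 1) ((z' - k + w + 1) + ((k - 2 * w : ℕ) : ℤ)) ∪
      Finset.Ico b (b + ((2 * w + 1 : ℕ) : ℤ)),
      (z' - k + w + 1 ≤ x ∧ x ≤ z' - w) ∨ (b ≤ x ∧ x ≤ b + 2 * w) := by
    intro x hx
    rw [Finset.mem_union, Finset.mem_Ico, Finset.mem_Ico] at hx
    omega
  have hsum : ∀ x i : ℤ, ((z' - k + w + 1 ≤ x ∧ x ≤ z' - w) ∨ (b ≤ x ∧ x ≤ b + 2 * w)) →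
      ((z' - k + w + 1 ≤ i ∧ i ≤ z' - w) ∨ (b ≤ i ∧ i ≤ b + 2 * w)) →
      Ee ≤ sn (2 * θ + (x + i + k - 1 : ℤ) * α) := by
    intro x i hx hi
    apply dist_le_sn
    apply hres
    · omega
    · have : |x + i + k - 1| ≤ 5 * (y : ℤ) := by rw [abs_le]; omega
      have : |((x + i + k - 1 : ℤ) : ℝ)| ≤ 5 * y := by exact_mod_cast this
      rw [hRy2]; linarith [Nat.cast_nonneg (α := ℝ) y]
  obtain ⟨x, hx, hDx⟩ := hI E θ k (z' - k + w + 1) b (k - 2 * w) (2 * w + 1)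
    (fun _ => Ee) (fun _ => Ee) Ee hE (by omega)
    (by
      rw [Finset.disjoint_left]
      intro x hx hx2
      rw [Finset.mem_Ico] at hx hx2
      omega)
    (Real.exp_pos _) hE1
    (by
      intro x hx i hi hne
      apply dist_le_sn
      refine le_trans ?_ (hdio (i - x) (sub_ne_zero.2 hne) ?_)
      · linarith [Real.exp_pos (-ε * y)]
      · have hx := hloc x hx
        have hi := hloc i hi
        have : |i - x| ≤ 2 * (y : ℤ) := by rw [abs_le]; omega
        have : |((i - x : ℤ) : ℝ)| ≤ 2 * y := by exact_mod_cast this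
        rw [hRy2]; linarith [Nat.cast_nonneg (α := ℝ) y])
    (fun x => ⟨Real.exp_pos _, hE1, Real.exp_pos _, hE1⟩)
    (fun x hx i hi hne => hsum x i (hloc x hx) (hloc i (Finset.mem_union_left _ hi)))
    (fun x hx i hi hne => hsum x i (hloc x hx) (hloc i (Finset.mem_union_right _ hi)))
  have hx' := hloc x hx
  have hEe2 : Ee ^ 2 = Real.exp (-(2 * ε * y)) := by
    rw [hEe, ← Real.exp_nat_mul]; congr 1; push_cast; ring
  have hG : bk lam α E k * Real.exp (-(5 * ε * y + C)) ≤ |Dt lam α E k (θ + x * α)| := by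
    refine le_trans ?_ hDx
    apply mul_le_mul_of_nonneg_left _ (bk_pos hl hE k).le
    rw [hEe2, hEe, ← Real.exp_add, ← Real.exp_add, ← Real.exp_add]
    apply Real.exp_le_exp.2
    linarith
  have fin : ∀ t : ℤ, x ≤ t - w → t + w + 1 ≤ x + k + 1 → |φ t| ≤ 2 * Real.exp (-L0 * w + (5 * ε * y + C)) := by
    intro t ht1 ht2
    have ht1R : (x : ℝ) ≤ t - w := by exact_mod_cast ht1
    have ht2R : (t : ℝ) + w + 1 ≤ x + k + 1 := by exact_mod_cast ht2
    exact green hl hE hL0 h h1 hk (x := x) (by omega) (by omega) (by linarith) (by linarith) hG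
  have fin2 : |φ z| ≤ 2 * Real.exp (-L0 * w + (5 * ε * y + C)) ∨
      |φ z'| ≤ 2 * Real.exp (-L0 * w + (5 * ε * y + C)) := by
    rcases hx' with hx' | hx'
    · right; exact fin z' (by omega) (by omega)
    · left; exact fin z (by omega) (by omega)
  rcases hzz with ⟨rfl, rfl⟩ | ⟨rfl, rfl⟩
  · rcases fin2 with h | h
    · exact (min_le_left _ _).trans h
    · exact (min_le_right _ _).trans h
  · rcases fin2 with h | h
    · exact (min_le_right _ _).trans h
    · exact (min_le_left _ _).trans h

set_option maxHeartbeats 2000000 in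
lemma key_lemma {lam α θ δ : ℝ} (hl : 1 < lam) (hα : IsDiophantine α) (hδ0 : 0 < δ)
    (hδ : δ < Real.log lam)
    (hNR : ∃ N : ℕ, ∀ n : ℤ, (N : ℝ) ≤ |(n : ℝ)| → Real.exp (-δ * |(n : ℝ)|) ≤ distToInt (2 * θ + n * α)) :
    ∃ A c' : ℝ, 0 < A ∧ 0 < c' ∧ ∀ E, |E| ≤ 2 + 2 * lam → ∀ φ : ℤ → ℝ,
      IsEigenfunction (amoPot lam α θ) E φ → (∀ n, |φ n| ≤ 1) → ∀ y : ℕ,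
      min |φ 0| |φ y| ≤ A * Real.exp (-c' * y) := by
  obtain ⟨N, hN⟩ := hNR
  set L0 := (δ + Real.log lam) / 2 with hL0d
  have hL0δ : δ < L0 := by rw [hL0d]; linarith
  have hL0 : 0 < L0 := by linarith
  have hL0l : L0 < Real.log lam := by rw [hL0d]; linarith
  set c := (1 - δ / L0) / 8 with hc
  have hdiv : δ / L0 < 1 := by rw [div_lt_one hL0]; exact hL0δ
  have hdiv0 : 0 < δ / L0 := by positivity
  have hc0 : 0 < c := by rw [hc]; linarith
  have hc1 : c ≤ 1 / 8 := by rw [hc]; linarith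
  have hδc : δ = L0 * (1 - 8 * c) := by rw [hc]; field_simp; ring
  obtain ⟨R, hR, hscale⟩ := scale (α := α) hl hL0l
  have hRR : (1 : ℝ) ≤ R := by exact_mod_cast hR
  have hR0 : (0 : ℝ) < R := by linarith
  set ε := L0 * c / (640 * R) with hε
  have hε0 : 0 < ε := by positivity
  obtain ⟨C, hI⟩ := interp_main hl hα (show 0 < ε / (3 * R) by positivity)
  replace hI : InterpProp lam α (ε / (3 * R)) C := hI
  obtain ⟨Y1, hY1⟩ := dioph_exp hα (11 * R) hε0
  obtain ⟨Y2, hY2⟩ := uniq_res hα (11 * R) hε0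
  obtain ⟨Y3, hY3⟩ := exists_nat_ge (36 * R / c)
  set c' := L0 * c / (64 * R) with hc'
  have hc'0 : 0 < c' := by positivity
  have hεc : ε = c' / 10 := by rw [hε, hc']; field_simp; norm_num
  have hc'L : 64 * c' ≤ L0 * c := by
    rw [hc', mul_div_assoc', div_le_iff₀ (by positivity)]
    have : 0 < L0 * c := by positivity
    nlinarith
  set A := 2 * Real.exp (2 * L0 + C) with hA
  set Y := Y1 + Y2 + Y3 + 2 * N + 4 with hY
  have main : ∀ E, |E| ≤ 2 + 2 * lam → ∀ φ : ℤ → ℝ,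
      IsEigenfunction (amoPot lam α θ) E φ → (∀ n, |φ n| ≤ 1) → ∀ y : ℕ, Y ≤ y →
      min |φ 0| |φ y| ≤ A * Real.exp (-c' * y) := by
    intro E hE φ h h1 y hy
    have hyR : (4 : ℝ) ≤ y := by exact_mod_cast (by omega : 4 ≤ y)
    have hdio := hY1 y (by omega)
    obtain ⟨n, hres⟩ := hY2 y (by omega) θ
    have hcy0 : 0 < c' * y := by positivity
    have hLcy : 64 * (c' * y) ≤ L0 * (c * y) := by nlinarith
    have hcomp : ∀ X : ℝ, X ≤ 2 * L0 + C - c' * y → 2 * Real.exp X ≤ A * Real.exp (-c' * y) := by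
      intro X hX
      rw [hA, mul_assoc, ← Real.exp_add]
      gcongr
      linarith
    by_cases hny : |(n : ℝ) - y| ≤ c * y
    · obtain ⟨k, hk1, hk2, hk⟩ := hscale E hE (3 * y)
      have hny' := abs_le.1 hny
      have hcy : c * y ≤ (1 / 8) * y := by gcongr
      have hn := hN n (by
        have h3 : 2 * (N : ℝ) ≤ y := by exact_mod_cast (by omega : 2 * N ≤ y)
        refine le_trans ?_ (le_abs_self _)
        linarith)
      have hk2R : (k : ℝ) ≤ R * (3 * y) := by exact_mod_cast hk2
      have := caseA hl hE hL0 hc0 hc1 hε0 hδ0 hI h h1 hk (by omega) hk1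
        (hk2.trans (le_of_eq (by ring))) hR (by
          rw [div_mul_eq_mul_div, div_le_iff₀ (by positivity)]
          nlinarith) hdio hres hn hny
      rcases this with this | this
      · refine (min_le_right _ _).trans (this.trans (hcomp _ ?_))
        rw [hεc]; nlinarith
      · refine this.trans (hcomp _ ?_)
        rw [hεc, hδc]
        have : 0 < L0 * c * c * y := by positivity
        nlinarith
    · rw [not_le] at hny
      set q := ⌊c * y / (4 * R)⌋₊ with hq
      have hq1 : (q : ℝ) ≤ c * y / (4 * R) := Nat.floor_le (by positivity)
      have hq2 : c * y / (4 * R) < q + 1 := Nat.lt_floor_add_one _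
      obtain ⟨k, hk1, hk2, hk⟩ := hscale E hE q
      have hk1R : (q : ℝ) ≤ k := by exact_mod_cast hk1
      have hk2R : (k : ℝ) ≤ R * q := by exact_mod_cast hk2
      have hk3R : (k : ℝ) ≤ c * y / 4 := by
        calc (k : ℝ) ≤ R * (c * y / (4 * R)) := hk2R.trans (by gcongr)
          _ = c * y / 4 := by field_simp
      have hcy : c * y ≤ (1 / 8) * y := by gcongr
      have hq8 : 8 ≤ q := by
        have h3 : (Y3 : ℝ) ≤ y := by exact_mod_cast (by omega : Y3 ≤ y)
        have h4 : 36 * R / c ≤ y := hY3.trans h3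
        rw [div_le_iff₀ hc0] at h4
        have h5 : (9 : ℝ) ≤ c * y / (4 * R) := by rw [le_div_iff₀ (by positivity)]; linarith
        have : (8 : ℝ) < q + 1 := by linarith
        have : 8 < q + 1 := by exact_mod_cast this
        omega
      have hky : k < y := by
        have : (k : ℝ) < y := by linarith
        exact_mod_cast this
      have hkn : (k : ℤ) < |n - y| := by
        have : (k : ℝ) < |(n : ℝ) - y| := by
          have : 0 < c * y := by positivity
          linarith
        exact_mod_cast this
      have hw2 : k < 8 * (k / 8) + 8 := by omega
      have hw2R : (k : ℝ) < 8 * ((k / 8 : ℕ) : ℝ) + 8 := by exact_mod_cast hw2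
      have he : ε / (3 * R) * k ≤ ε * y := by
          rw [div_mul_eq_mul_div, div_le_iff₀ (by positivity)]
          have : (k : ℝ) ≤ y * (3 * R) := by nlinarith
          nlinarith
      have hfin : min |φ 0| |φ y| ≤ 2 * Real.exp (-L0 * (k / 8 : ℕ) + (5 * ε * y + C)) := by
        rcases le_or_gt n y with hn | hn
        · rcases le_or_gt n 0 with hn0 | hn0
          · exact caseB_core hl hE hL0 hε0 hI h h1 hk (w := k / 8) (z := 0) (z' := y)
              (b := 0 - 3 * (k / 8 : ℕ)) (n := n) (by omega) (by omega) hky hR he hdio hres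
              (by simp) (Or.inl ⟨rfl, by omega⟩) (Or.inl ⟨rfl, hn⟩) hkn
          · exact caseB_core hl hE hL0 hε0 hI h h1 hk (w := k / 8) (z := 0) (z' := y)
              (b := 0 - k + 1 + (k / 8 : ℕ)) (n := n) (by omega) (by omega) hky hR he hdio hres
              (by simp) (Or.inr ⟨rfl, by omega⟩) (Or.inl ⟨rfl, hn⟩) hkn
        · rcases le_or_gt n (2 * y) with hn0 | hn0
          · exact caseB_core hl hE hL0 hε0 hI h h1 hk (w := k / 8) (z := y) (z' := 0)
              (b := y - 3 * (k / 8 : ℕ)) (n := n) (by omega) (by omega) hky hR he hdio hres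
              (by simp) (Or.inl ⟨rfl, by omega⟩) (Or.inr ⟨rfl, hn⟩) hkn
          · exact caseB_core hl hE hL0 hε0 hI h h1 hk (w := k / 8) (z := y) (z' := 0)
              (b := y - k + 1 + (k / 8 : ℕ)) (n := n) (by omega) (by omega) hky hR he hdio hres
              (by simp) (Or.inr ⟨rfl, by omega⟩) (Or.inr ⟨rfl, hn⟩) hkn
      refine hfin.trans (hcomp _ ?_)
      have hw3 : c * y / (4 * R) / 8 - 2 ≤ ((k / 8 : ℕ) : ℝ) := by linarith
      have hw4 : L0 * (c * y / (4 * R) / 8 - 2) ≤ L0 * ((k / 8 : ℕ) : ℝ) := by gcongr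
      have hw5 : L0 * (c * y / (4 * R) / 8 - 2) = 2 * (c' * y) - 2 * L0 := by
        rw [hc']; field_simp; ring
      rw [hεc]
      nlinarith
  refine ⟨A + Real.exp (c' * Y), c', by positivity, hc'0, fun E hE φ h h1 y => ?_⟩
  rcases le_or_gt Y y with hy | hy
  · refine (main E hE φ h h1 y hy).trans ?_
    gcongr
    linarith [Real.exp_pos (c' * Y)]
  · have hyR : (y : ℝ) ≤ Y := by exact_mod_cast hy.le
    calc min |φ 0| |φ y| ≤ 1 := (min_le_left _ _).trans (h1 0)
      _ ≤ Real.exp (c' * Y) * Real.exp (-c' * y) := by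
        rw [← Real.exp_add]; apply Real.one_le_exp; nlinarith
      _ ≤ _ := by
        gcongr
        linarith [show 0 < A by positivity]

lemma growth {Ψ a : ℤ → ℝ} {Λ s : ℝ} {m : ℤ} (hΛ : 2 ≤ Λ) (ha : ∀ k, |a k| ≤ Λ - 2)
    (h : ∀ k, |Ψ (k + 1) + Ψ (k - 1) - a k * Ψ k| ≤ s) (h0 : |Ψ m| ≤ s) (h1 : |Ψ (m + 1)| ≤ s)
    (j : ℕ) : (|Ψ (m + j)| ≤ Λ ^ j * s ∧ |Ψ (m + j + 1)| ≤ Λ ^ j * s) ∧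
      (|Ψ (m - j)| ≤ Λ ^ j * s ∧ |Ψ (m - j + 1)| ≤ Λ ^ j * s) := by
  have hs : 0 ≤ s := (abs_nonneg _).trans h0
  have step : ∀ k X : ℝ, ∀ A B D e : ℝ, s ≤ X → |A| ≤ Λ - 2 → |B| ≤ X → |D| ≤ X →
      |e + D - A * B| ≤ s → |e| ≤ Λ * X := by
    intro k X A B D e hX hA hB hD he
    have e1 : e = (e + D - A * B) + (A * B + -D) := by ring
    rw [e1]
    refine (abs_add_le _ _).trans ?_
    have e2 := abs_add_le (A * B) (-D)
    rw [abs_neg, abs_mul] at e2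
    have e3 : |A| * |B| ≤ (Λ - 2) * X := mul_le_mul hA hB (abs_nonneg _) (by linarith)
    linarith
  have hmono : ∀ j : ℕ, Λ ^ j * s ≤ Λ ^ (j + 1) * s := by
    intro j; gcongr
    · linarith
    · omega
  have hge : ∀ j : ℕ, s ≤ Λ ^ j * s := by
    intro j
    have : (1 : ℝ) ≤ Λ ^ j := one_le_pow₀ (by linarith)
    nlinarith
  induction j with
  | zero => simp [h0, h1]
  | succ j ih =>
    obtain ⟨⟨i1, i2⟩, i3, i4⟩ := ih
    have hpow : Λ ^ (j + 1) * s = Λ * (Λ ^ j * s) := by ring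
    refine ⟨⟨?_, ?_⟩, ?_, ?_⟩
    · push_cast; rw [← add_assoc]; exact i2.trans (hmono j)
    · rw [hpow]
      push_cast
      have := h (m + j + 1)
      rw [show m + (j : ℤ) + 1 - 1 = m + j by ring] at this
      rw [← add_assoc m]
      exact step 0 _ _ _ _ _ (hge j) (ha _) i2 i1 this
    · rw [hpow]
      push_cast
      have := h (m - j)
      rw [show m - (j : ℤ) - 1 = m - (j + 1) by ring, add_comm (Ψ _)] at this
      exact step 0 _ _ _ _ _ (hge j) (ha _) i3 i4 this
    · push_cast
      rw [show m - ((j : ℤ) + 1) + 1 = m - j by ring]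
      exact i3.trans (hmono j)

lemma amo_abs_le {lam α θ E : ℝ} (hl : 1 < lam) (hE : |E| ≤ 2 + 2 * lam) (k : ℤ) :
    |E - amoPot lam α θ k| ≤ (4 + 4 * lam) - 2 := by
  unfold amoPot
  refine (abs_sub _ _).trans ?_
  rw [abs_mul (2 * lam), abs_of_pos (by linarith : 0 < 2 * lam)]
  have h2 := Real.abs_cos_le_one (2 * Real.pi * (θ + k * α))
  nlinarith

lemma amo_refl {lam α θ : ℝ} (hl : 1 < lam) (n k : ℤ) :
    |amoPot lam α θ (n - k) - amoPot lam α θ k| ≤ 16 * lam * distToInt (2 * θ + n * α) := by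
  unfold amoPot
  rw [← mul_sub, abs_mul, abs_of_pos (by linarith : 0 < 2 * lam), cos_sub_cos_sn]
  have h1 := sn_le (2 * θ + n * α)
  have h2 := sn_le_two (θ + ((n - k : ℤ) : ℝ) * α - (θ + k * α))
  have h3 := sn_nonneg (2 * θ + n * α)
  have h4 := Real.pi_lt_four
  have h5 := dti_nonneg (2 * θ + n * α)
  have h6 : sn (θ + ((n - k : ℤ) : ℝ) * α + (θ + k * α)) = sn (2 * θ + n * α) := by
    congr 1; push_cast; ring
  rw [h6]
  set S := sn (2 * θ + n * α)
  set d := distToInt (2 * θ + n * α)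
  set S2 := sn (θ + ((n - k : ℤ) : ℝ) * α - (θ + k * α))
  have h7 : S * S2 ≤ S * 2 := by gcongr
  have h8 : S ≤ 8 * d := by nlinarith
  calc 2 * lam * (1 / 2 * (S * S2)) = lam * (S * S2) := by ring
    _ ≤ lam * (16 * d) := mul_le_mul_of_nonneg_left (by linarith) (by linarith)
    _ = _ := by ring

lemma wronsk_small {u V : ℤ → ℝ} {E η : ℝ} (hu : IsEigenfunction V E u) (h1 : ∀ n, |u n| ≤ 1)
    (hs : ∀ F : Finset ℤ, ∑ k ∈ F, u k ^ 2 ≤ 1) (n : ℤ) (hη : 0 ≤ η)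
    (hV : ∀ k, |V (n - k) - V k| ≤ η) (m : ℤ) :
    |u (m + 1) * u (n - m) - u m * u (n - (m + 1))| ≤ η := by
  set W : ℤ → ℝ := fun k => u (k + 1) * u (n - k) - u k * u (n - (k + 1)) with hW
  have hstep : ∀ k, W (k + 1) - W k = (V (n - (k + 1)) - V (k + 1)) * (u (k + 1) * u (n - (k + 1))) := by
    intro k
    have e1 := hu (k + 1)
    have e2 := hu (n - (k + 1))
    simp only [hW]
    rw [show k + 1 - 1 = k by ring] at e1
    rw [show n - (k + 1) + 1 = n - k by ring, show n - (k + 1) - 1 = n - (k + 1 + 1) by ring] at e2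
    linear_combination u (n - (k + 1)) * e1 - u (k + 1) * e2
  have hsum : ∀ j : ℕ, |W (m + j) - W m| ≤ ∑ i ∈ Finset.range j,
      η * ((u (m + i + 1) ^ 2 + u (n - (m + i + 1)) ^ 2) / 2) := by
    intro j
    induction j with
    | zero => simp
    | succ j ih =>
      rw [Finset.sum_range_succ]
      have e1 := hstep (m + j)
      have e2 : W (m + (j + 1 : ℕ)) - W m = (W (m + j) - W m) + (W (m + j + 1) - W (m + j)) := by
        push_cast; rw [← add_assoc]; ring
      rw [e2]
      refine (abs_add_le _ _).trans (add_le_add ih ?_)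
      rw [e1, abs_mul]
      apply mul_le_mul (hV _) _ (abs_nonneg _) hη
      rw [abs_le]; constructor <;> nlinarith [sq_nonneg (u (m + j + 1) - u (n - (m + j + 1))), sq_nonneg (u (m + j + 1) + u (n - (m + j + 1)))]
  have hsum2 : ∀ j : ℕ, |W (m + j) - W m| ≤ η := by
    intro j
    refine (hsum j).trans ?_
    rw [← Finset.mul_sum, ← Finset.sum_div, Finset.sum_add_distrib]
    have e1 := hs ((Finset.range j).image (fun i : ℕ => m + i + 1))
    have e2 := hs ((Finset.range j).image (fun i : ℕ => n - (m + i + 1)))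
    rw [Finset.sum_image (by intro a _ b _ h; simp only [] at h; omega)] at e1 e2
    apply mul_le_of_le_one_right hη
    linarith
  have hsummable : Summable (fun k => u k ^ 2) :=
    summable_of_sum_le (fun k => sq_nonneg _) hs
  have ht : Tendsto u cofinite (nhds 0) := by
    have := hsummable.tendsto_cofinite_zero
    have h2 := this.sqrt
    simp only [Real.sqrt_sq_eq_abs, Real.sqrt_zero] at h2
    exact (tendsto_zero_iff_abs_tendsto_zero _).2 h2
  have ht1 : ∀ c : ℤ, Tendsto (fun j : ℕ => |u (m + j + c)|) atTop (nhds 0) := by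
    intro c
    have hinj : Function.Injective (fun j : ℕ => m + (j : ℤ) + c) := by
      intro a b h; simp only [] at h; omega
    have := ht.comp hinj.tendsto_cofinite
    rw [Nat.cofinite_eq_atTop] at this
    exact (tendsto_zero_iff_abs_tendsto_zero _).1 this
  have hWb : ∀ j : ℕ, |W m| ≤ η + (|u (m + j + 1)| + |u (m + j + 0)|) := by
    intro j
    have e1 := hsum2 j
    have e2 : |W (m + j)| ≤ |u (m + j + 1)| + |u (m + j + 0)| := by
      simp only [hW]
      refine (abs_sub _ _).trans ?_
      rw [abs_mul, abs_mul, add_zero]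
      apply add_le_add
      · exact mul_le_of_le_one_right (abs_nonneg _) (h1 _)
      · exact mul_le_of_le_one_right (abs_nonneg _) (h1 _)
    have e3 : |W m| ≤ |W (m + j)| + |W (m + j) - W m| := by
      have := abs_sub (W (m + j)) (W (m + j) - W m)
      rwa [sub_sub_cancel] at this
    linarith
  have hlim := ((ht1 1).add (ht1 0)).const_add η
  have := ge_of_tendsto' hlim hWb
  simpa [hW] using this

lemma refl_small {lam α θ E : ℝ} (hl : 1 < lam) (hE : |E| ≤ 2 + 2 * lam) {u : ℤ → ℝ}
    (hu : IsEigenfunction (amoPot lam α θ) E u) (h1 : ∀ n, |u n| ≤ 1)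
    (hs : ∀ F : Finset ℤ, ∑ k ∈ F, u k ^ 2 ≤ 1) (n : ℤ) {r : ℝ} (hr : 0 ≤ r) (hr1 : r ≤ 1)
    (hd : 16 * lam * distToInt (2 * θ + n * α) ≤ r ^ 2) :
    |u 0| ≤ |u n| + (4 + 4 * lam) ^ (n.natAbs + 1) * r ∧
    |u 1| ≤ |u (n - 1)| + (4 + 4 * lam) ^ (n.natAbs + 1) * r := by
  set Λ := 4 + 4 * lam with hΛ
  have hV : ∀ k, |amoPot lam α θ (n - k) - amoPot lam α θ k| ≤ r ^ 2 :=
    fun k => (amo_refl hl n k).trans hd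
  set V := amoPot lam α θ with hVd
  have hrr : r ^ 2 ≤ r := by nlinarith
  have hrL : r ≤ Λ * r := by nlinarith
  have hkey : ∃ σ : ℝ, |σ| = 1 ∧ |u (n / 2) + σ * u (n - n / 2)| ≤ Λ * r ∧
      |u (n / 2 + 1) + σ * u (n - (n / 2 + 1))| ≤ Λ * r := by
    have hw := wronsk_small hu h1 hs n (sq_nonneg r) hV (n / 2)
    have hsplit : ∀ A B : ℝ, |A * B| ≤ r ^ 2 → |A| ≤ r ∨ |B| ≤ r := by
      intro A B h
      by_contra! hc
      rw [abs_mul] at h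
      nlinarith [mul_lt_mul'' hc.1 hc.2 hr hr]
    rcases Int.emod_two_eq_zero_or_one n with hn | hn
    · have e1 : n - n / 2 = n / 2 := by omega
      have e2 : n - (n / 2 + 1) = n / 2 - 1 := by omega
      rw [e1, e2] at hw ⊢
      set m := n / 2
      have hw' : |u m * (u (m + 1) - u (m - 1))| ≤ r ^ 2 := by
        rw [show u m * (u (m + 1) - u (m - 1)) = u (m + 1) * u m - u m * u (m - 1) by ring]; exact hw
      rcases hsplit _ _ hw' with h | h
      · refine ⟨1, by simp, ?_, ?_⟩
        · rw [one_mul]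
          have := abs_add_le (u m) (u m)
          nlinarith
        · have := hu m
          rw [one_mul, show u (m + 1) + u (m - 1) = (E - V m) * u m by linarith, abs_mul]
          have := amo_abs_le (α := α) (θ := θ) hl hE m
          calc _ ≤ (4 + 4 * lam - 2) * r := mul_le_mul this h (abs_nonneg _) (by linarith)
            _ ≤ _ := by rw [hΛ]; nlinarith
      · refine ⟨-1, by simp, ?_, ?_⟩
        · simp; positivity
        · rw [neg_one_mul, ← sub_eq_add_neg]; linarith
    · have e1 : n - n / 2 = n / 2 + 1 := by omega
      have e2 : n - (n / 2 + 1) = n / 2 := by omega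
      rw [e1, e2] at hw ⊢
      set m := n / 2
      have hw' : |(u (m + 1) - u m) * (u (m + 1) + u m)| ≤ r ^ 2 := by
        rw [show (u (m + 1) - u m) * (u (m + 1) + u m) = u (m + 1) * u (m + 1) - u m * u m by ring]
        exact hw
      rcases hsplit _ _ hw' with h | h
      · refine ⟨-1, by simp, ?_, ?_⟩
        · rw [neg_one_mul, ← sub_eq_add_neg, abs_sub_comm]; linarith
        · rw [neg_one_mul, ← sub_eq_add_neg]; linarith
      · refine ⟨1, by simp, ?_, ?_⟩
        · rw [one_mul, add_comm]; linarith
        · rw [one_mul]; linarith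
  obtain ⟨σ, hσ, hk0, hk1⟩ := hkey
  have hg := growth (Ψ := fun k => u k + σ * u (n - k)) (a := fun k => E - V k) (Λ := Λ) (s := Λ * r)
    (m := n / 2) (by rw [hΛ]; linarith) (fun k => amo_abs_le hl hE k) (by
      intro k
      have a1 := hu k
      have a2 := hu (n - k)
      rw [show n - (k + 1) = n - k - 1 by ring, show n - (k - 1) = n - k + 1 by ring]
      rw [show u (k + 1) + σ * u (n - k - 1) + (u (k - 1) + σ * u (n - k + 1)) -
        (E - V k) * (u k + σ * u (n - k)) = -(σ * ((V (n - k) - V k) * u (n - k))) by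
        linear_combination a1 + σ * a2]
      rw [abs_neg, abs_mul, abs_mul, hσ, one_mul]
      have := mul_le_mul (hV k) (h1 (n - k)) (abs_nonneg _) (sq_nonneg r)
      linarith) hk0 hk1 (n / 2).natAbs
  have hfin : |u 0 + σ * u n| ≤ Λ ^ (n / 2).natAbs * (Λ * r) ∧
      |u 1 + σ * u (n - 1)| ≤ Λ ^ (n / 2).natAbs * (Λ * r) := by
    rcases Int.natAbs_eq (n / 2) with h | h
    · have h3 : n / 2 - ((n / 2).natAbs : ℤ) = 0 := by omega
      have := hg.2
      rw [h3] at this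
      simpa using this
    · have h3 : n / 2 + ((n / 2).natAbs : ℤ) = 0 := by omega
      have := hg.1
      rw [h3] at this
      simpa using this
  have hpow : Λ ^ (n / 2).natAbs * (Λ * r) ≤ Λ ^ (n.natAbs + 1) * r := by
    rw [← mul_assoc, ← pow_succ]
    gcongr
    · linarith
    · omega
  have hfin2 : ∀ A B X : ℝ, |A + σ * B| ≤ X → |A| ≤ |B| + X := by
    intro A B X h
    have := abs_sub (A + σ * B) (σ * B)
    rw [add_sub_cancel_right, abs_mul σ, hσ, one_mul] at this
    linarith
  exact ⟨hfin2 _ _ _ (hfin.1.trans hpow), hfin2 _ _ _ (hfin.2.trans hpow)⟩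

lemma natAbs_cof : Tendsto Int.natAbs cofinite atTop := by
  rw [tendsto_atTop]
  intro b
  rw [Filter.eventually_cofinite]
  refine (Set.finite_Icc (-(b : ℤ)) b).subset ?_
  intro n hn
  simp only [Set.mem_ofPred_eq, not_le] at hn
  rw [Set.mem_Icc]; omega

lemma sq_tendsto {u : ℤ → ℝ} (hs : ∀ F : Finset ℤ, ∑ k ∈ F, u k ^ 2 ≤ 1) :
    Tendsto (fun n => |u n|) cofinite (nhds 0) := by
  have hsummable : Summable (fun k => u k ^ 2) :=
    summable_of_sum_le (fun k => sq_nonneg _) hs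
  have h2 := hsummable.tendsto_cofinite_zero.sqrt
  simpa only [Real.sqrt_sq_eq_abs, Real.sqrt_zero] using h2

lemma no_eig {lam α θ E : ℝ} (hl : 1 < lam) (hE : |E| ≤ 2 + 2 * lam) {u : ℤ → ℝ}
    (hu : IsEigenfunction (amoPot lam α θ) E u) (h1 : ∀ n, |u n| ≤ 1)
    (hs : ∀ F : Finset ℤ, ∑ k ∈ F, u k ^ 2 ≤ 1)
    (hK : ∀ K : ℝ, ∃ᶠ n : ℤ in cofinite,
      K < -Real.log (distToInt (2 * θ + n * α)) / |(n : ℝ)|) : u 0 = 0 ∧ u 1 = 0 := by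
  set Λ := 4 + 4 * lam with hΛ
  have hΛ1 : 1 < Λ := by rw [hΛ]; linarith
  have hΛ0 : 0 < Λ := by linarith
  have hlog : 0 < Real.log Λ := Real.log_pos hΛ1
  have hfr : ∃ᶠ n : ℤ in cofinite, (|u 0| ≤ |u n| + 4 * lam * Λ * (Λ⁻¹) ^ n.natAbs) ∧
      (|u 1| ≤ |u (n - 1)| + 4 * lam * Λ * (Λ⁻¹) ^ n.natAbs) := by
    refine (hK (4 * Real.log Λ)).mono ?_
    intro n hn
    have hn0 : n ≠ 0 := by
      rintro rfl
      simp at hn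
      linarith
    have hnR : 0 < |(n : ℝ)| := by simpa using hn0
    rw [lt_div_iff₀ hnR] at hn
    have hna : |(n : ℝ)| = (n.natAbs : ℝ) := by rw [Nat.cast_natAbs]; simp
    rw [hna] at hn hnR
    set d := distToInt (2 * θ + n * α) with hd
    have hd0 : 0 < d := by
      rcases (dti_nonneg (2 * θ + n * α)).lt_or_eq with h | h
      · exact h
      · rw [hd, ← h] at hn
        simp only [Real.log_zero, neg_zero] at hn
        have : 0 < 4 * Real.log Λ * (n.natAbs : ℝ) := by positivity
        linarith
    have hdl : d ≤ (Λ⁻¹) ^ (4 * n.natAbs) := by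
      rw [← Real.log_le_log_iff hd0 (by positivity), Real.log_pow, Real.log_inv]
      push_cast
      linarith
    have hn1 : 1 ≤ n.natAbs := by omega
    have hinv0 : 0 < Λ⁻¹ := by positivity
    have hinv1 : Λ⁻¹ ≤ 1 := inv_le_one_of_one_le₀ hΛ1.le
    have hp1 : (Λ⁻¹) ^ (2 * n.natAbs) ≤ Λ⁻¹ := by
      calc (Λ⁻¹) ^ (2 * n.natAbs) ≤ (Λ⁻¹) ^ 1 := pow_le_pow_of_le_one hinv0.le hinv1 (by omega)
        _ = _ := pow_one _
    have := refl_small hl hE hu h1 hs n (r := 4 * lam * (Λ⁻¹) ^ (2 * n.natAbs)) (by positivity)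
      (by
        calc 4 * lam * (Λ⁻¹) ^ (2 * n.natAbs) ≤ 4 * lam * Λ⁻¹ := by gcongr
          _ ≤ Λ * Λ⁻¹ := by gcongr; linarith
          _ = 1 := mul_inv_cancel₀ hΛ0.ne')
      (by
        calc 16 * lam * d ≤ 16 * lam * (Λ⁻¹) ^ (4 * n.natAbs) := by gcongr
          _ ≤ 16 * (lam * lam) * (Λ⁻¹) ^ (4 * n.natAbs) := by
            gcongr
            nlinarith
          _ = _ := by ring)
    rw [← hΛ] at this
    have e : Λ ^ (n.natAbs + 1) * (4 * lam * (Λ⁻¹) ^ (2 * n.natAbs)) =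
        4 * lam * Λ * (Λ⁻¹) ^ n.natAbs := by
      have : Λ ^ n.natAbs * (Λ⁻¹) ^ n.natAbs = 1 := by
        rw [← mul_pow, mul_inv_cancel₀ hΛ0.ne', one_pow]
      calc _ = 4 * lam * Λ * (Λ⁻¹) ^ n.natAbs * (Λ ^ n.natAbs * (Λ⁻¹) ^ n.natAbs) := by ring
        _ = _ := by rw [this, mul_one]
    rwa [e] at this
  have hut := sq_tendsto hs
  have hpt : Tendsto (fun n : ℤ => 4 * lam * Λ * (Λ⁻¹) ^ n.natAbs) cofinite (nhds 0) := by
    have := (tendsto_pow_atTop_nhds_zero_of_lt_one (by positivity : 0 ≤ Λ⁻¹)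
      (inv_lt_one_of_one_lt₀ hΛ1)).comp natAbs_cof
    simpa using this.const_mul (4 * lam * Λ)
  have hut1 : Tendsto (fun n => |u (n - 1)|) cofinite (nhds 0) :=
    hut.comp (sub_left_injective (b := (1 : ℤ))).tendsto_cofinite
  have a0 := ge_of_tendsto_of_frequently (hut.add hpt) (hfr.mono fun n h => h.1)
  have a1 := ge_of_tendsto_of_frequently (hut1.add hpt) (hfr.mono fun n h => h.2)
  rw [add_zero] at a0 a1
  exact ⟨abs_eq_zero.1 (le_antisymm a0 (abs_nonneg _)), abs_eq_zero.1 (le_antisymm a1 (abs_nonneg _))⟩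

lemma nr_extract {α θ L : ℝ} (hα : IsDiophantine α) (hL : 0 < L) (hδ : deltaPhase α θ < L)
    (hK : ¬ ∀ K : ℝ, ∃ᶠ n : ℤ in cofinite,
      K < -Real.log (distToInt (2 * θ + n * α)) / |(n : ℝ)|) :
    ∃ δ, 0 < δ ∧ δ < L ∧ ∃ N : ℕ, ∀ n : ℤ, (N : ℝ) ≤ |(n : ℝ)| →
      Real.exp (-δ * |(n : ℝ)|) ≤ distToInt (2 * θ + n * α) := by
  push Not at hK
  obtain ⟨K, hK⟩ := hK
  unfold deltaPhase at hδ
  rw [Filter.limsup_eq] at hδ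
  obtain ⟨a, ha, haL⟩ := exists_lt_of_csInf_lt ⟨K, by
    simpa using hK⟩ hδ
  simp only [Set.mem_ofPred_eq] at ha
  have hz : ∀ᶠ n : ℤ in cofinite, 0 < distToInt (2 * θ + n * α) := by
    rw [Filter.eventually_cofinite]
    apply Set.Subsingleton.finite
    intro x hx y hy
    simp only [Set.mem_ofPred_eq, not_lt] at hx hy
    by_contra hne
    have h1 := dioph_pos hα (x - y) (sub_ne_zero.2 hne)
    have h2 := dti_sub (2 * θ + x * α) (2 * θ + y * α)
    rw [show 2 * θ + x * α - (2 * θ + y * α) = ((x - y : ℤ) : ℝ) * α by push_cast; ring] at h2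
    linarith
  have hb := (ha.and hz)
  rw [Filter.eventually_cofinite] at hb
  obtain ⟨B, hB⟩ := (hb.image Int.natAbs).bddAbove
  refine ⟨max a (L / 2), lt_max_of_lt_right (by linarith), max_lt haL (by linarith), B + 1, ?_⟩
  intro n hn
  have hna : |(n : ℝ)| = (n.natAbs : ℝ) := by rw [Nat.cast_natAbs]; simp
  have hn2 : B + 1 ≤ n.natAbs := by
    rw [hna] at hn; exact_mod_cast hn
  have hgood : -Real.log (distToInt (2 * θ + n * α)) / |(n : ℝ)| ≤ a ∧
      0 < distToInt (2 * θ + n * α) := by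
    by_contra hc
    have := hB (Set.mem_image_of_mem Int.natAbs hc)
    omega
  have hnp : 0 < |(n : ℝ)| := by
    rw [hna]; exact_mod_cast (by omega : 0 < n.natAbs)
  obtain ⟨g1, g2⟩ := hgood
  rw [div_le_iff₀ hnp] at g1
  rw [← Real.le_log_iff_exp_le g2]
  have : a * |(n : ℝ)| ≤ max a (L / 2) * |(n : ℝ)| := by gcongr; exact le_max_left _ _
  linarith

lemma key2 {lam α θ δ : ℝ} (hl : 1 < lam) (hα : IsDiophantine α) (hδ0 : 0 < δ)
    (hδ : δ < Real.log lam) (hNR : ∃ N : ℕ, ∀ n : ℤ, (N : ℝ) ≤ |(n : ℝ)| →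
      Real.exp (-δ * |(n : ℝ)|) ≤ distToInt (2 * θ + n * α)) (j : ℤ) :
    ∃ A c : ℝ, 0 < A ∧ 0 < c ∧ ∀ E, |E| ≤ 2 + 2 * lam → ∀ φ : ℤ → ℝ,
      IsEigenfunction (amoPot lam α θ) E φ → (∀ n, |φ n| ≤ 1) → ∀ ℓ : ℤ,
      min |φ j| |φ ℓ| ≤ A * Real.exp (-c * |(ℓ : ℝ) - j|) := by
  obtain ⟨N, hN⟩ := hNR
  set δ' := (δ + Real.log lam) / 2 with hδ'
  have hd1 : δ < δ' := by rw [hδ']; linarith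
  have hd2 : δ' < Real.log lam := by rw [hδ']; linarith
  have hNR' : ∃ N' : ℕ, ∀ n : ℤ, (N' : ℝ) ≤ |(n : ℝ)| →
      Real.exp (-δ' * |(n : ℝ)|) ≤ distToInt (2 * (θ + j * α) + n * α) := by
    obtain ⟨N', hN'⟩ := exists_nat_ge (max (N + |2 * (j : ℝ)|) (δ * |2 * (j : ℝ)| / (δ' - δ)))
    refine ⟨N', fun n hn => ?_⟩
    have b1 : (N : ℝ) + |2 * (j : ℝ)| ≤ |(n : ℝ)| := (le_max_left _ _).trans (hN'.trans hn)
    have b2 : δ * |2 * (j : ℝ)| / (δ' - δ) ≤ |(n : ℝ)| := (le_max_right _ _).trans (hN'.trans hn)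
    rw [div_le_iff₀ (by linarith)] at b2
    have b3 := abs_sub ((n : ℝ) + 2 * j) (2 * j)
    rw [add_sub_cancel_right] at b3
    have b4 := abs_add_le (n : ℝ) (2 * j)
    have b5 := hN (n + 2 * j) (by push_cast; linarith)
    push_cast at b5
    rw [show 2 * (θ + j * α) + n * α = 2 * θ + (n + 2 * j) * α by ring]
    refine le_trans ?_ b5
    rw [Real.exp_le_exp]
    nlinarith
  have hNR'' : ∃ N' : ℕ, ∀ n : ℤ, (N' : ℝ) ≤ |(n : ℝ)| →
      Real.exp (-δ' * |(n : ℝ)|) ≤ distToInt (2 * (-(θ + j * α)) + n * α) := by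
    obtain ⟨N', h⟩ := hNR'
    refine ⟨N', fun n hn => ?_⟩
    have := h (-n) (by push_cast; rwa [abs_neg])
    push_cast at this
    rw [abs_neg, ← dti_neg] at this
    rwa [show 2 * (-(θ + j * α)) + n * α = -(2 * (θ + j * α) + -n * α) by ring]
  obtain ⟨A1, c1, hA1, hc1, H1⟩ := key_lemma hl hα (by linarith) hd2 hNR'
  obtain ⟨A2, c2, hA2, hc2, H2⟩ := key_lemma hl hα (by linarith) hd2 hNR''
  refine ⟨max A1 A2, min c1 c2, lt_max_of_lt_left hA1, lt_min hc1 hc2, ?_⟩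
  intro E hE φ hφ h1 ℓ
  have fin : ∀ A c : ℝ, 0 < A → A ≤ max A1 A2 → min c1 c2 ≤ c → ∀ y : ℕ, |(ℓ : ℝ) - j| = y →
      A * Real.exp (-c * y) ≤ max A1 A2 * Real.exp (-(min c1 c2) * |(ℓ : ℝ) - j|) := by
    intro A c hA hA' hc y hy
    rw [hy]
    gcongr
  rcases le_total j ℓ with h | h
  · obtain ⟨y, hy⟩ := Int.eq_ofNat_of_zero_le (sub_nonneg.2 h)
    have hℓ : ℓ = j + y := by omega
    have := H1 E hE (fun k => φ (j + k)) (by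
      intro k
      have := hφ (j + k)
      have e1 : j + (k + 1) = j + k + 1 := by ring
      have e2 : j + (k - 1) = j + k - 1 := by ring
      have e3 : amoPot lam α (θ + j * α) k = amoPot lam α θ (j + k) := by
        unfold amoPot
        congr 2; push_cast; ring
      simp only [e1, e2, e3]
      linarith) (fun n => h1 _) y
    rw [add_zero, ← hℓ] at this
    refine this.trans (fin _ _ hA1 (le_max_left _ _) (min_le_left _ _) y ?_)
    rw [hℓ]; push_cast; rw [add_sub_cancel_left]; simp
  · obtain ⟨y, hy⟩ := Int.eq_ofNat_of_zero_le (sub_nonneg.2 h)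
    have hℓ : ℓ = j - y := by omega
    have := H2 E hE (fun k => φ (j - k)) (by
      intro k
      have := hφ (j - k)
      have e1 : j - (k + 1) = j - k - 1 := by ring
      have e2 : j - (k - 1) = j - k + 1 := by ring
      have e3 : amoPot lam α (-(θ + j * α)) k = amoPot lam α θ (j - k) := by
        unfold amoPot
        rw [← Real.cos_neg]
        congr 2; push_cast; ring
      simp only [e1, e2, e3]
      linarith) (fun n => h1 _) y
    rw [sub_zero, ← hℓ] at this
    refine this.trans (fin _ _ hA2 (le_max_right _ _) (min_le_right _ _) y ?_)
    rw [hℓ]; push_cast; rw [abs_sub_comm, sub_sub_cancel]; simp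

theorem amo_eigenfunction_product_bound
    (lam α θ : ℝ) (hlam : 1 < lam) (hα : IsDiophantine α)
    (hδ : deltaPhase α θ < Real.log lam)
    (Φ : HilbertBasis ℕ ℝ (lp (fun _ : ℤ => ℝ) 2))
    (heig : ∀ s : ℕ, ∃ E : ℝ, IsEigenfunction (amoPot lam α θ) E (fun n => Φ s n))
    (m : ℕ → ℤ) (hm : ∀ (s : ℕ) (n : ℤ), |Φ s n| ≤ |Φ s (m s)|) :
    ∃ C C₁ C₂ : ℝ, 0 < C ∧ 0 < C₁ ∧ 0 < C₂ ∧
      ∃ M : ℕ, ∀ s : ℕ, (M : ℤ) ≤ |m s| →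
        ∀ n ℓ : ℤ,
          |Φ s n * Φ s ℓ| ≤
            C * Real.exp (-C₁ * |(n : ℝ) - (ℓ : ℝ)| + C₂ * |(n : ℝ)|) := by
  have hnorm : ∀ s, ‖Φ s‖ = 1 := fun s => Φ.orthonormal.1 s
  have h1 : ∀ s n, |Φ s n| ≤ 1 := by
    intro s n
    have := lp.norm_apply_le_norm (by norm_num : (2 : ENNReal) ≠ 0) (Φ s) n
    rwa [hnorm, Real.norm_eq_abs] at this
  have hs : ∀ s, ∀ F : Finset ℤ, ∑ k ∈ F, (Φ s k) ^ 2 ≤ 1 := by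
    intro s F
    have := lp.sum_rpow_le_norm_rpow (by norm_num : 0 < (2 : ENNReal).toReal) (Φ s) F
    simpa [hnorm] using this
  have hne : ∀ s, Φ s (m s) ≠ 0 := by
    intro s h0
    have : Φ s = 0 := by
      ext n
      have := hm s n
      rw [h0, abs_zero] at this
      simpa using abs_eq_zero.1 (le_antisymm this (abs_nonneg _))
    have h2 := hnorm s
    rw [this, norm_zero] at h2
    exact zero_ne_one h2
  have hEb : ∀ s E, IsEigenfunction (amoPot lam α θ) E (fun n => Φ s n) → |E| ≤ 2 + 2 * lam := by
    intro s E hE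
    have h := hE (m s)
    simp only [] at h
    have hp : 0 < |Φ s (m s)| := abs_pos.2 (hne s)
    have hV : |amoPot lam α θ (m s)| ≤ 2 * lam := by
      unfold amoPot
      rw [abs_mul, abs_of_pos (by linarith : 0 < 2 * lam)]
      exact mul_le_of_le_one_right (by linarith) (Real.abs_cos_le_one _)
    have a1 : |E| * |Φ s (m s)| ≤ (2 + 2 * lam) * |Φ s (m s)| := by
      rw [← abs_mul, ← h]
      refine (abs_add_three _ _ _).trans ?_
      rw [abs_mul]
      have := mul_le_mul_of_nonneg_right hV hp.le
      linarith [hm s (m s + 1), hm s (m s - 1)]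
    exact le_of_mul_le_mul_right a1 hp
  set Λ := 4 + 4 * lam with hΛ
  have hΛ2 : 2 ≤ Λ := by rw [hΛ]; linarith
  have hlog : 0 < Real.log Λ := Real.log_pos (by linarith)
  have hgr : ∀ s (n : ℤ), |Φ s n| ≤ Λ ^ n.natAbs * (|Φ s 0| + |Φ s 1|) := by
    intro s n
    obtain ⟨E, hE⟩ := heig s
    have hE' := hEb s E hE
    have hg := growth (Ψ := fun n => Φ s n) (a := fun k => E - amoPot lam α θ k) (Λ := Λ)
      (s := |Φ s 0| + |Φ s 1|) (m := 0) hΛ2 (fun k => amo_abs_le hlam hE' k) (by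
        intro k
        have := hE k
        simp only [] at this ⊢
        rw [show Φ s (k + 1) + Φ s (k - 1) - (E - amoPot lam α θ k) * Φ s k = 0 by
          linear_combination this, abs_zero]
        positivity) (by simp) (by simp) n.natAbs
    rcases Int.natAbs_eq n with h | h
    · have := hg.1.1
      rwa [zero_add, ← h] at this
    · have := hg.2.1
      rwa [zero_sub, ← h] at this
  by_cases hK : ∀ K : ℝ, ∃ᶠ n : ℤ in cofinite,
      K < -Real.log (distToInt (2 * θ + n * α)) / |(n : ℝ)|
  · exfalso
    obtain ⟨E, hE⟩ := heig 0
    obtain ⟨u0, u1⟩ := no_eig hlam (hEb 0 E hE) hE (h1 0) (hs 0) hK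
    have := hgr 0 (m 0)
    rw [u0, u1] at this
    simp only [abs_zero, add_zero, mul_zero] at this
    exact hne 0 (abs_eq_zero.1 (le_antisymm this (abs_nonneg _)))
  obtain ⟨δ, hδ0, hδL, hNR⟩ := nr_extract hα (Real.log_pos hlam) hδ hK
  obtain ⟨A0, c0, hA0, hc0, H0⟩ := key2 hlam hα hδ0 hδL hNR 0
  obtain ⟨A1, c1, hA1, hc1, H1⟩ := key2 hlam hα hδ0 hδL hNR 1
  set c := min c0 c1 with hc
  have hcp : 0 < c := lt_min hc0 hc1
  refine ⟨A0 + A1 * Real.exp c, c, Real.log Λ + c, by positivity, hcp, by positivity, 0, ?_⟩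
  intro s _ n ℓ
  obtain ⟨E, hE⟩ := heig s
  have hE' := hEb s E hE
  have b0 := H0 E hE' _ hE (h1 s) ℓ
  have b1 := H1 E hE' _ hE (h1 s) ℓ
  simp only [Int.cast_zero, Int.cast_one, sub_zero] at b0 b1
  have hmin : ∀ a b : ℝ, 0 ≤ a → a ≤ 1 → 0 ≤ b → b ≤ 1 → a * b ≤ min a b := by
    intro a b p1 p2 p3 p4
    exact le_min (mul_le_of_le_one_right p1 p4) (mul_le_of_le_one_left p3 p2)
  have d0 := (hmin _ _ (abs_nonneg (Φ s 0)) (h1 s 0) (abs_nonneg (Φ s ℓ)) (h1 s ℓ)).trans b0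
  have d1 := (hmin _ _ (abs_nonneg (Φ s 1)) (h1 s 1) (abs_nonneg (Φ s ℓ)) (h1 s ℓ)).trans b1
  have e0 : Real.exp (-c0 * |(ℓ : ℝ)|) ≤ Real.exp (-c * |(ℓ : ℝ)|) := by
    have := min_le_left c0 c1
    gcongr
  have e1 : Real.exp (-c1 * |(ℓ : ℝ) - 1|) ≤ Real.exp c * Real.exp (-c * |(ℓ : ℝ)|) := by
    rw [← Real.exp_add, Real.exp_le_exp]
    have i1 : c * |(ℓ : ℝ) - 1| ≤ c1 * |(ℓ : ℝ) - 1| :=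
      mul_le_mul_of_nonneg_right (min_le_right _ _) (abs_nonneg _)
    have i2 : |(ℓ : ℝ)| ≤ |(ℓ : ℝ) - 1| + 1 := by
      have := abs_add_le ((ℓ : ℝ) - 1) 1
      rwa [sub_add_cancel, abs_one] at this
    nlinarith
  have f : (|Φ s 0| + |Φ s 1|) * |Φ s ℓ| ≤ (A0 + A1 * Real.exp c) * Real.exp (-c * |(ℓ : ℝ)|) := by
    have g0 := mul_le_mul_of_nonneg_left e0 hA0.le
    have g1 := mul_le_mul_of_nonneg_left e1 hA1.le
    nlinarith
  have hpow : Λ ^ n.natAbs = Real.exp (Real.log Λ * |(n : ℝ)|) := by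
    have hna : |(n : ℝ)| = (n.natAbs : ℝ) := by rw [Nat.cast_natAbs]; simp
    rw [hna, mul_comm, Real.exp_nat_mul, Real.exp_log (by linarith)]
  rw [abs_mul]
  calc |Φ s n| * |Φ s ℓ| ≤ (Λ ^ n.natAbs * (|Φ s 0| + |Φ s 1|)) * |Φ s ℓ| := by
        gcongr; exact hgr s n
    _ = Λ ^ n.natAbs * ((|Φ s 0| + |Φ s 1|) * |Φ s ℓ|) := by ring
    _ ≤ Λ ^ n.natAbs * ((A0 + A1 * Real.exp c) * Real.exp (-c * |(ℓ : ℝ)|)) := by gcongr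
    _ = (A0 + A1 * Real.exp c) * Real.exp (Real.log Λ * |(n : ℝ)| + -c * |(ℓ : ℝ)|) := by
        rw [hpow, Real.exp_add]; ring
    _ ≤ _ := by
        apply mul_le_mul_of_nonneg_left _ (by positivity)
        rw [Real.exp_le_exp]
        have := mul_le_mul_of_nonneg_left (abs_sub (n : ℝ) ℓ) hcp.le
        linarith
end
end

section
/- Let g : ℤ → ℝ be bounded, E ∈ ℝ, and let u be a normalized eigensolution: u(n+1) + u(n−1) + g(n)u(n) = E·u(n) for all n and Σ_n |u(n)|² = 1. Suppose there are ε > 0, C > 0 and a sequence of integers k_i with |k_i| → ∞ such that |g(n) − g(k_i − n)| ≤ C·e^{−ε|k_i|} for all n ∈ ℤ and all i. Set Φ(n) = (u(n), u(n−1))ᵀ and Φ_i(n) = (u(k_i − n), u(k_i − n + 1))ᵀ. Then there exist C′ > 0 and I such that for all i ≥ I: if k_i is even, there exists ι ∈ {−1, 1} with ‖Φ(k_i/2) + ι·Φ_i(k_i/2)‖ ≤ C′·e^{−(ε/2)|k_i|}; and if k_i is odd, there exists ι ∈ {−1, 1} with ‖Φ((k_i−1)/2 + 1) + ι·Φ_i((k_i−1)/2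 + 1)‖ ≤ C′·e^{−(ε/2)|k_i|}. -/
noncomputable section

open Filter Real

/-- Euclidean norm of the vector (a, b)ᵀ ∈ ℝ². -/
def pairNorm (a b : ℝ) : ℝ := Real.sqrt (a ^ 2 + b ^ 2)

lemma aux_part (u : ℤ → ℝ) (husum : Summable (fun n : ℤ => u n ^ 2))
    (hunorm : (∑' n : ℤ, u n ^ 2) = 1) (f : ℕ → ℤ) (hf : Function.Injective f) (N : ℕ) :
    ∑ j ∈ Finset.range N, u (f j) ^ 2 ≤ 1 := by
  have h := husum.sum_le_tsum ((Finset.range N).map ⟨f, hf⟩) (fun i _ => sq_nonneg (u i))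
  rw [Finset.sum_map, hunorm] at h
  exact h

lemma aux_tend (u : ℤ → ℝ) (husum : Summable (fun n : ℤ => u n ^ 2))
    (f : ℕ → ℤ) (hf : Function.Injective f) :
    Tendsto (fun j => u (f j) ^ 2) atTop (nhds 0) :=
  (husum.comp_injective hf).tendsto_atTop_zero

lemma aux_wron (g : ℤ → ℝ) (E : ℝ) (u : ℤ → ℝ) (hu : IsEigenfunction g E u)
    (husum : Summable (fun n : ℤ => u n ^ 2)) (hunorm : (∑' n : ℤ, u n ^ 2) = 1)
    (δ : ℝ) (hδ : 0 ≤ δ) (k : ℤ) (hsym : ∀ n : ℤ, |g n - g (k - n)| ≤ δ) (n : ℤ) :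
    |u n * u (k - n + 1) - u (n - 1) * u (k - n)| ≤ δ := by
  set W : ℕ → ℝ := fun j => u (n + j) * u (k - n - j + 1) - u (n + j - 1) * u (k - n - j) with hW
  have step : ∀ j : ℕ, |W j - W (j+1)| ≤ δ * ((u (n + j) ^ 2 + u (k - n - j) ^ 2) / 2) := by
    intro j
    have h1 := hu (n + j)
    have h2 := hu (k - n - j)
    have h3 := hsym (n + j)
    rw [show k - (n + (j:ℤ)) = k - n - j by ring] at h3
    have e : W j - W (j+1) = (g (n+j) - g (k - n - j)) * (u (n+j) * u (k - n - j)) := by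
      simp only [hW]
      push_cast
      rw [show n + ((j:ℤ) + 1) = n + j + 1 by ring, show k - n - ((j:ℤ) + 1) + 1 = k - n - j by ring,
        show k - n - ((j:ℤ) + 1) = k - n - j - 1 by ring, show n + (j:ℤ) + 1 - 1 = n + j by ring]
      linear_combination u (n + j) * h2 - u (k - n - j) * h1
    rw [e, abs_mul]
    refine mul_le_mul h3 ?_ (abs_nonneg _) hδ
    rw [abs_le]
    constructor <;> nlinarith [sq_nonneg (u (n+j) + u (k-n-j)), sq_nonneg (u (n+j) - u (k-n-j))]
  have i1 : ∀ c : ℤ, Function.Injective (fun j : ℕ => c + (j:ℤ)) := fun c a b h => by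
    simp only at h; omega
  have i2 : ∀ c : ℤ, Function.Injective (fun j : ℕ => c - (j:ℤ)) := fun c a b h => by
    simp only at h; omega
  have tele : ∀ N : ℕ, |W 0| ≤ δ + |W N| := by
    intro N
    have h1 : ∑ j ∈ Finset.range N, (W j - W (j+1)) = W 0 - W N := Finset.sum_range_sub' W N
    have h2 : |W 0 - W N| ≤ δ := by
      rw [← h1]
      refine (Finset.abs_sum_le_sum_abs _ _).trans ((Finset.sum_le_sum fun j _ => step j).trans ?_)
      rw [← Finset.mul_sum, ← Finset.sum_div, Finset.sum_add_distrib]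
      have a := aux_part u husum hunorm _ (i1 n) N
      have b := aux_part u husum hunorm _ (i2 (k - n)) N
      nlinarith
    have := abs_sub_abs_le_abs_sub (W 0) (W N)
    linarith
  have lim : Tendsto (fun N => |W N|) atTop (nhds 0) := by
    have t := (((aux_tend u husum _ (i1 n)).add (aux_tend u husum _ (i2 (k-n+1)))).add
      (aux_tend u husum _ (i1 (n-1)))).add (aux_tend u husum _ (i2 (k-n)))
    simp only [add_zero] at t
    refine squeeze_zero (fun _ => abs_nonneg _) (fun N => ?_) t
    simp only [hW]
    rw [show k - n - (N:ℤ) + 1 = k - n + 1 - N by ring, show n + (N:ℤ) - 1 = n - 1 + N by ring]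
    generalize u (n + N) = a
    generalize u (k - n + 1 - N) = b
    generalize u (n - 1 + N) = c
    generalize u (k - n - N) = d
    rw [abs_le]
    constructor <;> nlinarith [sq_nonneg (a+b), sq_nonneg (a-b), sq_nonneg (c+d), sq_nonneg (c-d), sq_nonneg a, sq_nonneg b, sq_nonneg c, sq_nonneg d]
  have fin : |W 0| ≤ δ + 0 := ge_of_tendsto' (lim.const_add δ) tele
  simpa [hW] using fin

lemma aux_pair (a b : ℝ) : pairNorm a b ≤ |a| + |b| := by
  unfold pairNorm
  refine Real.sqrt_le_iff.2 ⟨by positivity, ?_⟩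
  nlinarith [sq_abs a, sq_abs b, mul_nonneg (abs_nonneg a) (abs_nonneg b)]

lemma aux_prod (a b s : ℝ) (hs : 0 ≤ s) (h : |a * b| ≤ s ^ 2) : |a| ≤ s ∨ |b| ≤ s := by
  by_contra! hc
  rw [abs_mul] at h
  nlinarith [mul_lt_mul'' hc.1 hc.2 hs hs]

theorem palindromic_phase_matching
    (g : ℤ → ℝ) (hg : ∃ M : ℝ, ∀ n : ℤ, |g n| ≤ M)
    (E : ℝ) (u : ℤ → ℝ)
    (hu : IsEigenfunction g E u)
    (husum : Summable (fun n : ℤ => u n ^ 2))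
    (hunorm : (∑' n : ℤ, u n ^ 2) = 1)
    (ε C : ℝ) (hε : 0 < ε) (hC : 0 < C)
    (k : ℕ → ℤ) (hk : Filter.Tendsto (fun i : ℕ => |k i|) Filter.atTop Filter.atTop)
    (hsym : ∀ (n : ℤ) (i : ℕ), |g n - g (k i - n)| ≤ C * Real.exp (-ε * |(k i : ℝ)|)) :
    ∃ C' : ℝ, 0 < C' ∧ ∃ I : ℕ, ∀ i : ℕ, I ≤ i →
      (Even (k i) →
        ∃ ι : ℝ, (ι = 1 ∨ ι = -1) ∧
          pairNorm (u (k i / 2) + ι * u (k i - k i / 2))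
              (u (k i / 2 - 1) + ι * u (k i - k i / 2 + 1)) ≤
            C' * Real.exp (-(ε / 2) * |(k i : ℝ)|)) ∧
      (Odd (k i) →
        ∃ ι : ℝ, (ι = 1 ∨ ι = -1) ∧
          pairNorm (u ((k i - 1) / 2 + 1) + ι * u (k i - ((k i - 1) / 2 + 1)))
              (u ((k i - 1) / 2) + ι * u (k i - ((k i - 1) / 2 + 1) + 1)) ≤
            C' * Real.exp (-(ε / 2) * |(k i : ℝ)|)) := by
  obtain ⟨M, hM⟩ := hg
  have hM0 : 0 ≤ M := (abs_nonneg _).trans (hM 0)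
  refine ⟨√C * (2 + |E| + M), by positivity, 0, fun i _ => ?_⟩
  set s := √C * Real.exp (-(ε / 2) * |(k i : ℝ)|) with hs
  have hs0 : 0 ≤ s := by positivity
  have hs2 : C * Real.exp (-ε * |(k i : ℝ)|) = s ^ 2 := by
    rw [hs, mul_pow, Real.sq_sqrt hC.le, ← Real.exp_nat_mul]
    congr 2
    push_cast
    ring
  have hCs : √C * (2 + |E| + M) * Real.exp (-(ε / 2) * |(k i : ℝ)|) = (2 + |E| + M) * s := by
    rw [hs]; ring
  rw [hCs]
  have hEM : 0 ≤ (|E| + M) * s := by positivity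
  have key := aux_wron g E u hu husum hunorm (s ^ 2) (sq_nonneg s) (k i)
    (fun n => hs2 ▸ hsym n i)
  constructor
  · rintro ⟨m, hm⟩
    have h1 : k i / 2 = m := by omega
    have h2 : k i - m = m := by omega
    rw [h1, h2]
    have h := key m
    rw [h2, show u m * u (m + 1) - u (m - 1) * u m = u m * (u (m+1) - u (m-1)) by ring] at h
    rcases aux_prod _ _ s hs0 h with h | h
    · refine ⟨1, Or.inl rfl, (aux_pair _ _).trans ?_⟩
      have e : u (m - 1) + 1 * u (m + 1) = (E - g m) * u m := by linear_combination hu m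
      have e1 : u m + 1 * u m = 2 * u m := by ring
      rw [e, e1, abs_mul, abs_mul, abs_two]
      have h3 : |E - g m| ≤ |E| + M := (abs_sub _ _).trans (by linarith [hM m])
      have := mul_le_mul h3 h (abs_nonneg _) (by positivity)
      linarith
    · refine ⟨-1, Or.inr rfl, (aux_pair _ _).trans ?_⟩
      have e : u (m - 1) + -1 * u (m + 1) = -(u (m + 1) - u (m-1)) := by ring
      have e1 : u m + -1 * u m = 0 := by ring
      rw [e, e1, abs_neg, abs_zero]
      linarith
  · rintro ⟨m, hm⟩
    have h1 : (k i - 1) / 2 = m := by omega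
    have h2 : k i - (m + 1) = m := by omega
    rw [h1, h2]
    have h := key (m + 1)
    rw [h2, add_sub_cancel_right, show u (m + 1) * u (m + 1) - u m * u m
      = (u (m+1) + u m) * (u (m+1) - u m) by ring] at h
    rcases aux_prod _ _ s hs0 h with h | h
    · refine ⟨1, Or.inl rfl, (aux_pair _ _).trans ?_⟩
      rw [one_mul, one_mul, add_comm (u m)]
      linarith
    · refine ⟨-1, Or.inr rfl, (aux_pair _ _).trans ?_⟩
      have e : u m + -1 * u (m + 1) = -(u (m + 1) - u m) := by ring
      have e1 : u (m + 1) + -1 * u m = u (m + 1) - u m := by ring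
      rw [e, e1, abs_neg]
      linarith
end
end
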